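/- Central limit theorem for Betti numbers: fix integers 0 ≤ q < d and t ∈ [0,1]. Assume P is a stationary product probability measure on Ω = [0,1]^{K^d}. Then there exists a constant σ² ≥ 0, depending on d, q and t, such that as n → ∞: (i) |Λ_n|^{−1} E[(β_q^n(t) − E[β_q^n(t)])²] → σ², and (ii) |Λ_n|^{−1/2} (β_q^n(t) − E[β_q^n(t)]) converges in distribution to the Gaussian law N(0,σ²). -/

import Mathlib

open MeasureTheory Filter Topology

noncomputable section

/-- An elementary cube in `ℝ^d`: the `i`-th component is the elementary interval
`[l, l+1]` if the Boolean is `true` (nondegenerate) and `[l, l]` if `false` (degenerate). -/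
abbrev ElemCube (d : ℕ) := Fin d → ℤ × Bool

/-- The dimension of an elementary cube: the number of nondegenerate components. -/
def cubeDim {d : ℕ} (Q : ElemCube d) : ℕ :=
  (Finset.univ.filter fun i => (Q i).2 = true).card

/-- The geometric realization of an elementary cube as a subset of `ℝ^d`. -/
def cubeSet {d : ℕ} (Q : ElemCube d) : Set (Fin d → ℝ) :=
  {x | ∀ i, x i ∈ Set.Icc ((Q i).1 : ℝ) ((Q i).1 + (if (Q i).2 then 1 else 0))}

/-- A cubical set is a union of elementary cubes. -/
def IsCubical {d : ℕ} (X : Set (Fin d → ℝ)) : Prop :=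
  ∃ S : Set (ElemCube d), X = ⋃ Q ∈ S, cubeSet Q

/-- The free `ℤ`-module generated by all elementary cubes of `ℝ^d` (all dimensions mixed). -/
abbrev CubChain (d : ℕ) := ElemCube d →₀ ℤ

/-- The cubical boundary of a single elementary cube, defined by induction on the ambient
dimension, following the inductive definition: in `ℝ¹`, `∂ [l,l+1]^ = [l+1]^ - [l]^` and
`∂ Q̂ = 0` for degenerate `Q`; and for `Q = I × P`,
`∂ Q̂ = (∂ Î) ⋄ P̂ + (-1)^(dim I) Î ⋄ (∂ P̂)`, where `⋄` is the cubical product. -/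
def boundaryCube : (d : ℕ) → ElemCube d → CubChain d
  | 0, _ => 0
  | d + 1, Q =>
      (if (Q 0).2 then
          Finsupp.single (Fin.cons ((Q 0).1 + 1, false) (fun i => Q i.succ)) (1 : ℤ)
            - Finsupp.single (Fin.cons ((Q 0).1, false) (fun i => Q i.succ)) (1 : ℤ)
        else 0)
      + (if (Q 0).2 then (-1 : ℤ) else 1) •
          (boundaryCube d (fun i => Q i.succ)).sum
            (fun R n => Finsupp.single (Fin.cons (Q 0) R) n)

/-- The cubical boundary operator, the `ℤ`-linear extension of `boundaryCube`. -/
def boundaryHom (d : ℕ) : CubChain d →ₗ[ℤ] CubChain d :=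
  Finsupp.lsum ℤ fun Q => LinearMap.toSpanSingleton ℤ (CubChain d) (boundaryCube d Q)

/-- `C_k^d(X)`: the submodule of chains supported on the `k`-dimensional elementary cubes
contained in `X`. -/
def chainsOn (d k : ℕ) (X : Set (Fin d → ℝ)) : Submodule ℤ (CubChain d) :=
  Finsupp.supported ℤ ℤ {Q : ElemCube d | cubeDim Q = k ∧ cubeSet Q ⊆ X}

/-- `Z_q(X) = ker ∂_q^X`, the cycles of the cubical set `X` in degree `q`. -/
def cycleMod (d q : ℕ) (X : Set (Fin d → ℝ)) : Submodule ℤ (CubChain d) :=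
  chainsOn d q X ⊓ LinearMap.ker (boundaryHom d)

/-- `B_q(X) = im ∂_{q+1}^X`, the boundaries of the cubical set `X` in degree `q`. -/
def boundaryMod (d q : ℕ) (X : Set (Fin d → ℝ)) : Submodule ℤ (CubChain d) :=
  Submodule.map (boundaryHom d) (chainsOn d (q + 1) X)

/-- The `q`-th Betti number of a cubical set: the rank of the free part of the `q`-th
cubical homology `H_q(X) = Z_q(X) / B_q(X)`. -/
def betti (d q : ℕ) (X : Set (Fin d → ℝ)) : ℕ :=
  Module.finrank ℤ
    (↥(cycleMod d q X) ⧸ (boundaryMod d q X).comap (cycleMod d q X).subtype)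

/-- `Λ_n = [-n, n]^d ⊆ ℝ^d`. -/
def lambda (d n : ℕ) : Set (Fin d → ℝ) := {x | ∀ i, x i ∈ Set.Icc (-(n : ℝ)) n}

/-- The configuration space `Ω = [0,1]^{K^d}` with the product σ-field. -/
abbrev Config (d : ℕ) := ElemCube d → unitInterval

/-- Translation of an elementary cube by `x ∈ ℤ^d`. -/
def translateCube {d : ℕ} (x : Fin d → ℤ) (Q : ElemCube d) : ElemCube d :=
  fun i => ((Q i).1 + x i, (Q i).2)

/-- The translation action `τ_x` on configurations: `(τ_x ω)_Q = ω_{-x+Q}`. -/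
def configShift {d : ℕ} (x : Fin d → ℤ) (ω : Config d) : Config d :=
  fun Q => ω (translateCube (-x) Q)

/-- Stationarity of a measure on configuration space: `P(τ_x⁻¹ A) = P(A)`. -/
def Stationary {d : ℕ} (P : Measure (Config d)) : Prop :=
  ∀ (x : Fin d → ℤ) (A : Set (Config d)), MeasurableSet A → P (configShift x ⁻¹' A) = P A

/-- Ergodicity of a measure on configuration space under translations. -/
def ErgodicConfig {d : ℕ} (P : Measure (Config d)) : Prop :=
  ∀ A : Set (Config d), MeasurableSet A →
    (∀ x : Fin d → ℤ, configShift x ⁻¹' A = A) → P A = 0 ∨ P A = 1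

/-- The random cubical set `X(t) = ⋃ {Q ∈ K^d : ω_Q ≤ t}`. -/
def cubSet {d : ℕ} (ω : Config d) (t : ℝ) : Set (Fin d → ℝ) :=
  ⋃ Q ∈ {Q : ElemCube d | (ω Q : ℝ) ≤ t}, cubeSet Q

/-- `β_q^n(t)(ω) = β_q(X(t) ∩ Λ_n)`. -/
def bettiN (d q n : ℕ) (t : ℝ) (ω : Config d) : ℕ :=
  betti d q (cubSet ω t ∩ lambda d n)

/-- `β̂_q(t) := limsup_{n → ∞} |Λ_n|⁻¹ E[β_q^n(t)]`, where `|Λ_n| = (2n)^d`. -/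
def betaHat (d q : ℕ) (P : Measure (Config d)) (t : ℝ) : ℝ :=
  limsup (fun n : ℕ => ((2 * (n : ℝ)) ^ d)⁻¹ * ∫ ω, (bettiN d q n t ω : ℝ) ∂P) atTop


/-! ### The boundary operator -/

/-- Prepending a component to every cube of a chain, as a linear map. -/
def consChain (d : ℕ) (a : ℤ × Bool) : CubChain d →ₗ[ℤ] CubChain (d + 1) :=
  Finsupp.lmapDomain ℤ ℤ (fun R : ElemCube d => (Fin.cons a R : ElemCube (d + 1)))

lemma consChain_single (d : ℕ) (a : ℤ × Bool) (R : ElemCube d) (n : ℤ) :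
    consChain d a (Finsupp.single R n) = Finsupp.single (Fin.cons a R : ElemCube (d + 1)) n := by
  simp [consChain, Finsupp.mapDomain_single]

lemma consChain_eq_sum (d : ℕ) (a : ℤ × Bool) (c : CubChain d) :
    c.sum (fun R n => Finsupp.single (Fin.cons a R : ElemCube (d + 1)) n) = consChain d a c := rfl

lemma boundaryHom_single (d : ℕ) (Q : ElemCube d) (n : ℤ) :
    boundaryHom d (Finsupp.single Q n) = n • boundaryCube d Q := by
  simp [boundaryHom]

lemma boundaryCube_succ (d : ℕ) (Q : ElemCube (d + 1)) :
    boundaryCube (d + 1) Q =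
      (if (Q 0).2 then
          Finsupp.single (Fin.cons ((Q 0).1 + 1, false) (fun i => Q i.succ)) (1 : ℤ)
            - Finsupp.single (Fin.cons ((Q 0).1, false) (fun i => Q i.succ)) (1 : ℤ)
        else 0)
      + (if (Q 0).2 then (-1 : ℤ) else 1) •
          consChain d (Q 0) (boundaryCube d (fun i => Q i.succ)) := rfl

lemma boundaryHom_consChain (d : ℕ) (a : ℤ × Bool) (c : CubChain d) :
    boundaryHom (d + 1) (consChain d a c) =
      (if a.2 then consChain d (a.1 + 1, false) c - consChain d (a.1, false) c else 0)
      + (if a.2 then (-1 : ℤ) else 1) • consChain d a (boundaryHom d c) := by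
  induction c using Finsupp.induction_linear with
  | zero => simp
  | add f g hf hg =>
    rw [map_add, map_add, hf, hg]
    split_ifs <;> simp <;> abel
  | single R n =>
    rw [consChain_single, boundaryHom_single, boundaryCube_succ, boundaryHom_single]
    simp only [Fin.cons_zero, Fin.cons_succ, map_smul, consChain_single]
    split_ifs
    · simp only [smul_add, smul_sub, Finsupp.smul_single, smul_eq_mul, mul_one, neg_smul, one_smul,
        smul_neg]
    · simp

lemma boundaryHom_boundaryHom : ∀ (d : ℕ) (c : CubChain d),
    boundaryHom d (boundaryHom d c) = 0 := by
  intro d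
  induction d with
  | zero =>
    intro c
    have : boundaryHom 0 = 0 := by
      ext Q : 1
      ext
      simp [boundaryHom, boundaryCube]
    simp [this]
  | succ d ih =>
    intro c
    induction c using Finsupp.induction_linear with
    | zero => simp
    | add f g hf hg => rw [map_add, map_add, hf, hg, add_zero]
    | single Q n =>
      have hQ : Finsupp.single Q n = consChain d (Q 0) (Finsupp.single (fun i => Q i.succ) n) := by
        rw [consChain_single]
        congr 1
        exact (Fin.cons_self_tail Q).symm
      rw [hQ, boundaryHom_consChain]
      split_ifs with h
      · simp only [map_add, map_sub, map_smul, boundaryHom_consChain, h, ih]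
        simp
      · simp only [map_smul, map_add, boundaryHom_consChain, h, ih]
        simp

/-- The face relation on elementary cubes. -/
def cellLe {d : ℕ} (R Q : ElemCube d) : Prop :=
  ∀ i, (Q i).1 ≤ (R i).1 ∧
    (R i).1 + (if (R i).2 then 1 else 0) ≤ (Q i).1 + (if (Q i).2 then 1 else 0)

lemma cellLe_refl {d : ℕ} (R : ElemCube d) : cellLe R R := fun _ => ⟨le_rfl, le_rfl⟩

lemma cellLe_trans {d : ℕ} {R S T : ElemCube d} (h1 : cellLe R S) (h2 : cellLe S T) :
    cellLe R T := fun i => ⟨(h2 i).1.trans (h1 i).1, (h1 i).2.trans (h2 i).2⟩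

/-- A canonical point of the relative interior of a cube. -/
def midPt {d : ℕ} (R : ElemCube d) : Fin d → ℝ :=
  fun i => (R i).1 + (if (R i).2 then 1 / 2 else 0)

lemma midPt_mem {d : ℕ} (R : ElemCube d) : midPt R ∈ cubeSet R := by
  intro i
  simp only [midPt, Set.mem_Icc]
  constructor <;> split_ifs <;> norm_num

lemma cellLe_of_midPt_mem {d : ℕ} {R Q : ElemCube d} (h : midPt R ∈ cubeSet Q) : cellLe R Q := by
  intro i
  have hi := h i
  simp only [midPt, Set.mem_Icc] at hi
  obtain ⟨h1, h2⟩ := hi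
  by_cases hR : (R i).2 <;> by_cases hQ : (Q i).2 <;> simp only [hR, hQ, if_true, if_false] at h1 h2 ⊢
  · have h1' : (2 * (Q i).1 : ℤ) ≤ 2 * (R i).1 + 1 := by
      exact_mod_cast (show (2 * (Q i).1 : ℝ) ≤ 2 * (R i).1 + 1 by linarith)
    have h2' : (2 * (R i).1 + 1 : ℤ) ≤ 2 * (Q i).1 + 2 := by
      exact_mod_cast (show (2 * (R i).1 + 1 : ℝ) ≤ 2 * (Q i).1 + 2 by linarith)
    omega
  · exfalso
    have h1' : (2 * (Q i).1 : ℤ) ≤ 2 * (R i).1 + 1 := by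
      exact_mod_cast (show (2 * (Q i).1 : ℝ) ≤ 2 * (R i).1 + 1 by linarith)
    have h2' : (2 * (R i).1 + 1 : ℤ) ≤ 2 * (Q i).1 := by
      have : (2 * (R i).1 + 1 : ℝ) ≤ 2 * (Q i).1 := by simp at h2; linarith
      exact_mod_cast this
    omega
  · simp at h1 h2 ⊢
    have h2' : (R i).1 ≤ (Q i).1 + 1 := by exact_mod_cast h2
    exact ⟨h1, h2'⟩
  · simp at h1 h2 ⊢
    exact ⟨h1, h2⟩

lemma cubeSet_subset_iff {d : ℕ} {R Q : ElemCube d} : cubeSet R ⊆ cubeSet Q ↔ cellLe R Q := by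
  constructor
  · intro h
    exact cellLe_of_midPt_mem (h (midPt_mem R))
  · intro h x hx i
    obtain ⟨h1, h2⟩ := hx i
    obtain ⟨h3, h4⟩ := h i
    have h3' : ((Q i).1 : ℝ) ≤ (R i).1 := by exact_mod_cast h3
    have h4' : ((R i).1 : ℝ) + (if (R i).2 then 1 else 0) ≤ (Q i).1 + (if (Q i).2 then 1 else 0) := by
      exact_mod_cast h4
    exact ⟨h3'.trans h1, h2.trans h4'⟩

lemma cubeSet_subset_cubSet_iff {d : ℕ} (R : ElemCube d) (ω : Config d) (t : ℝ) :
    cubeSet R ⊆ cubSet ω t ↔ ∃ Q, (ω Q : ℝ) ≤ t ∧ cellLe R Q := by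
  constructor
  · intro h
    have := h (midPt_mem R)
    simp only [cubSet, Set.mem_iUnion, Set.mem_ofPred_eq] at this
    obtain ⟨Q, hQ, hm⟩ := this
    exact ⟨Q, hQ, cellLe_of_midPt_mem hm⟩
  · rintro ⟨Q, hQ, hle⟩
    exact (cubeSet_subset_iff.2 hle).trans (Set.subset_biUnion_of_mem (u := cubeSet) hQ)

lemma cubeSet_subset_lambda_iff {d : ℕ} (R : ElemCube d) (n : ℕ) :
    cubeSet R ⊆ lambda d n ↔
      ∀ i, -(n : ℤ) ≤ (R i).1 ∧ (R i).1 + (if (R i).2 then 1 else 0) ≤ (n : ℤ) := by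
  constructor
  · intro h i
    have h1 := h (show (fun i => ((R i).1 : ℝ)) ∈ cubeSet R from fun i => by
      constructor
      · exact le_rfl
      · dsimp only; split_ifs <;> norm_num) i
    have h2 := h (show (fun i => ((R i).1 : ℝ) + (if (R i).2 then 1 else 0)) ∈ cubeSet R from
      fun i => by
        constructor
        · dsimp only; split_ifs <;> norm_num
        · exact le_rfl) i
    have h1' := h1.1
    have h2' := h2.2

    constructor
    · exact_mod_cast h1'
    · exact_mod_cast h2'
  · intro h x hx i
    obtain ⟨h1, h2⟩ := hx i
    obtain ⟨h3, h4⟩ := h i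
    have h3' : (-(n : ℝ)) ≤ (R i).1 := by exact_mod_cast h3
    have h4' : ((R i).1 : ℝ) + (if (R i).2 then 1 else 0) ≤ n := by exact_mod_cast h4
    exact ⟨h3'.trans h1, h2.trans h4'⟩

lemma cubeDim_cons {d : ℕ} (a : ℤ × Bool) (R : ElemCube d) :
    cubeDim (Fin.cons a R : ElemCube (d + 1)) = (if a.2 then 1 else 0) + cubeDim R := by
  simp only [cubeDim, Finset.card_filter]
  rw [Fin.sum_univ_succ]
  simp

lemma boundaryCube_support : ∀ (d : ℕ) (Q R : ElemCube d), R ∈ (boundaryCube d Q).support →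
    cubeDim R + 1 = cubeDim Q ∧ cellLe R Q := by
  intro d
  induction d with
  | zero => intro Q R h; simp [boundaryCube] at h
  | succ d ih =>
    intro Q R h
    classical
    have hQ : (Fin.cons (Q 0) (fun i => Q i.succ) : ElemCube (d + 1)) = Q := Fin.cons_self_tail Q
    have hdimQ : cubeDim Q = (if (Q 0).2 then 1 else 0) + cubeDim (fun i => Q i.succ) := by
      conv_lhs => rw [← hQ]
      rw [cubeDim_cons]
    rw [boundaryCube_succ] at h
    have h' := Finsupp.support_add h
    rw [Finset.mem_union] at h'
    rcases h' with h' | h'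
    · split_ifs at h' with hb
      · have h'' := Finsupp.support_sub h'
        rw [Finset.mem_union] at h''
        rcases h'' with h'' | h''
        · have := Finsupp.support_single_subset h''
          rw [Finset.mem_singleton] at this
          subst this
          rw [cubeDim_cons, hdimQ]
          refine ⟨by simp [hb]; ring, ?_⟩
          intro i
          refine Fin.cases ?_ (fun j => ?_) i
          · simp [hb]
          · simp
        · have := Finsupp.support_single_subset h''
          rw [Finset.mem_singleton] at this
          subst this
          rw [cubeDim_cons, hdimQ]
          refine ⟨by simp [hb]; ring, ?_⟩
          intro i
          refine Fin.cases ?_ (fun j => ?_) i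
          · simp [hb]
          · simp
      · simp at h'
    · have h1 : R ∈ (consChain d (Q 0) (boundaryCube d (fun i => Q i.succ))).support :=
        Finsupp.support_smul h'
      have h2 := Finsupp.mapDomain_support h1
      rw [Finset.mem_image] at h2
      obtain ⟨R', hR', rfl⟩ := h2
      obtain ⟨h3, h4⟩ := ih _ _ hR'
      rw [cubeDim_cons, hdimQ]
      refine ⟨by omega, ?_⟩
      intro i
      refine Fin.cases ?_ (fun j => ?_) i
      · simp
      · simpa using h4 j

lemma translateCube_cons {d : ℕ} (x : Fin (d + 1) → ℤ) (a : ℤ × Bool) (R : ElemCube d) :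
    translateCube x (Fin.cons a R : ElemCube (d + 1)) =
      (Fin.cons (a.1 + x 0, a.2) (translateCube (fun i => x i.succ) R) : ElemCube (d + 1)) := by
  funext i
  refine Fin.cases ?_ (fun j => ?_) i <;> simp [translateCube]

lemma boundaryCube_translate : ∀ (d : ℕ) (x : Fin d → ℤ) (Q : ElemCube d),
    boundaryCube d (translateCube x Q) =
      Finsupp.lmapDomain ℤ ℤ (translateCube x) (boundaryCube d Q) := by
  intro d
  induction d with
  | zero => intro x Q; simp [boundaryCube]
  | succ d ih =>
    intro x Q
    have key : ∀ (a : ℤ × Bool) (c : CubChain d),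
        Finsupp.lmapDomain ℤ ℤ (translateCube x) (consChain d a c) =
          consChain d (a.1 + x 0, a.2)
            (Finsupp.lmapDomain ℤ ℤ (translateCube (fun i => x i.succ)) c) := by
      intro a c
      induction c using Finsupp.induction_linear with
      | zero => simp
      | add f g hf hg => simp only [map_add, hf, hg]
      | single R n =>
        simp only [consChain_single, Finsupp.lmapDomain_apply, Finsupp.mapDomain_single,
          translateCube_cons]
    rw [boundaryCube_succ, boundaryCube_succ, map_add, map_smul, key, ← ih]
    have e : (fun i : Fin d => translateCube x Q i.succ) =
      translateCube (fun i => x i.succ) (fun i : Fin d => Q i.succ) := rfl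
    rw [e]
    have e2 : translateCube x Q 0 = ((Q 0).1 + x 0, (Q 0).2) := rfl
    rw [e2]
    congr 1
    split_ifs with h
    · simp only [map_sub, Finsupp.lmapDomain_apply, Finsupp.mapDomain_single,
          translateCube_cons]
      congr 4
      ring_nf
    · simp

/-! ### Betti numbers as a function of the set of cells -/

/-- Rank of the boundary operator restricted to a set of cells. -/
def rk (d : ℕ) (S : Set (ElemCube d)) : ℕ :=
  Module.finrank ℤ (Submodule.span ℤ (boundaryCube d '' S))

/-- The cells of dimension `k` in `S`. -/
def cellsOf {d : ℕ} (k : ℕ) (S : Set (ElemCube d)) : Set (ElemCube d) := {Q ∈ S | cubeDim Q = k}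

/-- The Betti number expressed through ranks. -/
def GG (d q : ℕ) (S : Set (ElemCube d)) : ℝ :=
  ((cellsOf q S).ncard : ℝ) - rk d (cellsOf q S) - rk d (cellsOf (q + 1) S)

lemma cellsOf_finite {d : ℕ} (k : ℕ) {S : Set (ElemCube d)} (hS : S.Finite) :
    (cellsOf k S).Finite := hS.subset (fun _ h => h.1)

lemma cellsOf_union {d : ℕ} (k : ℕ) (S T : Set (ElemCube d)) :
    cellsOf k (S ∪ T) = cellsOf k S ∪ cellsOf k T := by
  ext Q; simp only [cellsOf, Set.mem_ofPred_eq, Set.mem_union]; tauto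

lemma cellsOf_mono {d : ℕ} (k : ℕ) {S T : Set (ElemCube d)} (h : S ⊆ T) :
    cellsOf k S ⊆ cellsOf k T := fun _ hQ => ⟨h hQ.1, hQ.2⟩

lemma cellsOf_subset {d : ℕ} (k : ℕ) (S : Set (ElemCube d)) : cellsOf k S ⊆ S := fun _ h => h.1

lemma rk_submodular (d : ℕ) {S S' T : Set (ElemCube d)} (hS : S'.Finite) (hT : T.Finite)
    (h : S ⊆ S') : rk d (S' ∪ T) + rk d S ≤ rk d S' + rk d (S ∪ T) := by
  unfold rk
  set A := Submodule.span ℤ (boundaryCube d '' S')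
  set B := Submodule.span ℤ (boundaryCube d '' (S ∪ T))
  have f1 : Module.Finite ℤ A := Module.Finite.span_of_finite ℤ (hS.image _)
  have f2 : Module.Finite ℤ B :=
    Module.Finite.span_of_finite ℤ (((hS.subset h).union hT).image _)
  have e1 : Submodule.span ℤ (boundaryCube d '' (S' ∪ T)) = A ⊔ B := by
    simp only [A, B, ← Submodule.span_union, ← Set.image_union]
    congr 2
    ext x; simp only [Set.mem_union]
    have := @h x
    tauto
  have f3 : Module.Finite ℤ (A ⊔ B : Submodule ℤ (CubChain d)) := by
    rw [← e1]; exact Module.Finite.span_of_finite ℤ ((hS.union hT).image _)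
  have f4 : Module.Finite ℤ (A ⊓ B : Submodule ℤ (CubChain d)) :=
    Module.Finite.of_injective (Submodule.inclusion (inf_le_left : A ⊓ B ≤ A))
      (Submodule.inclusion_injective _)
  have key := Submodule.rank_sup_add_rank_inf_eq A B
  rw [← Module.finrank_eq_rank, ← Module.finrank_eq_rank, ← Module.finrank_eq_rank,
    ← Module.finrank_eq_rank] at key
  norm_cast at key
  rw [e1, ← key]
  gcongr
  apply Submodule.finrank_mono
  refine le_inf (Submodule.span_mono (Set.image_mono h))
    (Submodule.span_mono (Set.image_mono Set.subset_union_left))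

lemma rk_mono (d : ℕ) {S T : Set (ElemCube d)} (hT : T.Finite) (h : S ⊆ T) : rk d S ≤ rk d T := by
  have f1 : Module.Finite ℤ (Submodule.span ℤ (boundaryCube d '' T)) :=
    Module.Finite.span_of_finite ℤ (hT.image _)
  exact Submodule.finrank_mono (Submodule.span_mono (Set.image_mono h))

lemma rk_le_ncard (d : ℕ) {S : Set (ElemCube d)} (hS : S.Finite) : rk d S ≤ S.ncard := by
  unfold rk
  classical
  have := (hS.image (boundaryCube d)).fintype
  refine (finrank_span_le_card (boundaryCube d '' S)).trans ?_
  rw [← Set.ncard_eq_toFinset_card']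
  exact Set.ncard_image_le hS

lemma rk_union_le (d : ℕ) {S T : Set (ElemCube d)} (hS : S.Finite) (hT : T.Finite) :
    rk d (S ∪ T) ≤ rk d S + T.ncard := by
  have h := rk_submodular d hS hT (Set.empty_subset S)
  rw [Set.empty_union] at h
  have h2 := rk_le_ncard d hT
  omega

lemma GG_supermodular (d q : ℕ) {S S' T : Set (ElemCube d)} (hS : S'.Finite) (hT : T.Finite)
    (h : S ⊆ S') (hST : T ∩ S' ⊆ S) :
    GG d q (S ∪ T) - GG d q S ≤ GG d q (S' ∪ T) - GG d q S' := by
  unfold GG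
  simp only [cellsOf_union]
  have fS := cellsOf_finite q hS
  have fS' := cellsOf_finite (q + 1) hS
  have fT := cellsOf_finite q hT
  have fT' := cellsOf_finite (q + 1) hT
  have m1 := cellsOf_mono q h
  have m2 := cellsOf_mono (q + 1) h
  have r1 := rk_submodular d fS fT m1
  have r2 := rk_submodular d fS' fT' m2
  have c : (cellsOf q S ∪ cellsOf q T).ncard + (cellsOf q S').ncard =
      (cellsOf q S' ∪ cellsOf q T).ncard + (cellsOf q S).ncard := by
    have a1 : cellsOf q S ∪ cellsOf q T = cellsOf q S ∪ (cellsOf q T \ cellsOf q S) := by simp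
    have a2 : cellsOf q S' ∪ cellsOf q T = cellsOf q S' ∪ (cellsOf q T \ cellsOf q S) := by
      ext x
      simp only [Set.mem_union, Set.mem_diff]
      have := @m1 x
      tauto
    rw [a1, a2, Set.ncard_union_eq disjoint_sdiff_self_right (fS.subset m1) (fT.diff),
      Set.ncard_union_eq _ fS fT.diff]
    · ring
    · rw [Set.disjoint_left]
      rintro x hx ⟨hx1, hx2⟩
      exact hx2 ⟨hST ⟨hx1.1, hx.1⟩, hx1.2⟩
  have r1' : (rk d (cellsOf q S' ∪ cellsOf q T) : ℝ) + rk d (cellsOf q S) ≤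
    rk d (cellsOf q S') + rk d (cellsOf q S ∪ cellsOf q T) := by exact_mod_cast r1
  have r2' : (rk d (cellsOf (q+1) S' ∪ cellsOf (q+1) T) : ℝ) + rk d (cellsOf (q+1) S) ≤
    rk d (cellsOf (q+1) S') + rk d (cellsOf (q+1) S ∪ cellsOf (q+1) T) := by exact_mod_cast r2
  have c' : ((cellsOf q S ∪ cellsOf q T).ncard : ℝ) + (cellsOf q S').ncard =
      (cellsOf q S' ∪ cellsOf q T).ncard + (cellsOf q S).ncard := by exact_mod_cast c
  linarith

lemma GG_abs_diff_le (d q : ℕ) {S T : Set (ElemCube d)} (hS : S.Finite) (hT : T.Finite) :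
    |GG d q (S ∪ T) - GG d q S| ≤ 2 * T.ncard := by
  unfold GG
  simp only [cellsOf_union]
  have fS := cellsOf_finite q hS
  have fS' := cellsOf_finite (q + 1) hS
  have fT := cellsOf_finite q hT
  have fT' := cellsOf_finite (q + 1) hT
  have n1 : (cellsOf q T).ncard ≤ T.ncard := Set.ncard_le_ncard (cellsOf_subset q T) hT
  have n2 : (cellsOf (q + 1) T).ncard ≤ T.ncard := Set.ncard_le_ncard (cellsOf_subset (q + 1) T) hT
  have a1 := rk_union_le d fS fT
  have a2 := rk_union_le d fS' fT'
  have b1 := rk_mono d (fS.union fT) (Set.subset_union_left (s := cellsOf q S) (t := cellsOf q T))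
  have b2 := rk_mono d (fS'.union fT')
    (Set.subset_union_left (s := cellsOf (q + 1) S) (t := cellsOf (q + 1) T))
  have c1 := Set.ncard_union_le (cellsOf q S) (cellsOf q T)
  have c2 : (cellsOf q S).ncard ≤ (cellsOf q S ∪ cellsOf q T).ncard :=
    Set.ncard_le_ncard Set.subset_union_left (fS.union fT)
  have e1 : (rk d (cellsOf q S ∪ cellsOf q T) : ℝ) ≤ rk d (cellsOf q S) + T.ncard := by
    exact_mod_cast a1.trans (by omega)
  have e2 : (rk d (cellsOf (q+1) S ∪ cellsOf (q+1) T) : ℝ) ≤ rk d (cellsOf (q+1) S) + T.ncard := by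
    exact_mod_cast a2.trans (by omega)
  have e3 : (rk d (cellsOf q S) : ℝ) ≤ rk d (cellsOf q S ∪ cellsOf q T) := by exact_mod_cast b1
  have e4 : (rk d (cellsOf (q+1) S) : ℝ) ≤ rk d (cellsOf (q+1) S ∪ cellsOf (q+1) T) := by
    exact_mod_cast b2
  have e5 : ((cellsOf q S ∪ cellsOf q T).ncard : ℝ) ≤ (cellsOf q S).ncard + T.ncard := by
    exact_mod_cast c1.trans (by omega)
  have e6 : ((cellsOf q S).ncard : ℝ) ≤ (cellsOf q S ∪ cellsOf q T).ncard := by exact_mod_cast c2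
  rw [abs_le]
  constructor <;> linarith

lemma translateCube_neg_cancel {d : ℕ} (x : Fin d → ℤ) (Q : ElemCube d) :
    translateCube (-x) (translateCube x Q) = Q := by
  funext i; simp [translateCube]

lemma translateCube_cancel_neg {d : ℕ} (x : Fin d → ℤ) (Q : ElemCube d) :
    translateCube x (translateCube (-x) Q) = Q := by
  funext i; simp [translateCube]

lemma translateCube_injective {d : ℕ} (x : Fin d → ℤ) :
    Function.Injective (translateCube (d := d) x) :=
  Function.LeftInverse.injective (translateCube_neg_cancel x)

lemma cubeDim_translate {d : ℕ} (x : Fin d → ℤ) (Q : ElemCube d) :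
    cubeDim (translateCube x Q) = cubeDim Q := rfl

lemma cellsOf_translate {d : ℕ} (k : ℕ) (x : Fin d → ℤ) (S : Set (ElemCube d)) :
    cellsOf k (translateCube x '' S) = translateCube x '' (cellsOf k S) := by
  ext Q
  constructor
  · rintro ⟨⟨R, hR, rfl⟩, h⟩
    exact ⟨R, ⟨hR, h⟩, rfl⟩
  · rintro ⟨R, ⟨hR, h⟩, rfl⟩
    exact ⟨⟨R, hR, rfl⟩, h⟩

lemma rk_translate (d : ℕ) (x : Fin d → ℤ) (S : Set (ElemCube d)) :
    rk d (translateCube x '' S) = rk d S := by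
  unfold rk
  have hinj : Function.Injective (Finsupp.lmapDomain ℤ ℤ (translateCube (d := d) x)) :=
    Finsupp.mapDomain_injective (translateCube_injective x)
  have : boundaryCube d '' (translateCube x '' S) =
      (Finsupp.lmapDomain ℤ ℤ (translateCube (d := d) x)) '' (boundaryCube d '' S) := by
    rw [Set.image_image, Set.image_image]
    exact Set.image_congr fun Q _ => boundaryCube_translate d x Q
  rw [this, Submodule.span_image]
  exact (LinearEquiv.finrank_eq (Submodule.equivMapOfInjective _ hinj _)).symm

lemma GG_translate (d q : ℕ) (x : Fin d → ℤ) (S : Set (ElemCube d)) :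
    GG d q (translateCube x '' S) = GG d q S := by
  unfold GG
  rw [cellsOf_translate, cellsOf_translate, rk_translate, rk_translate,
    Set.ncard_image_of_injective _ (translateCube_injective x)]

lemma map_chains (d k : ℕ) (X : Set (Fin d → ℝ)) :
    Submodule.map (boundaryHom d) (chainsOn d k X) =
      Submodule.span ℤ (boundaryCube d '' (cellsOf k {Q | cubeSet Q ⊆ X})) := by
  unfold chainsOn
  rw [Finsupp.supported_eq_span_single, Submodule.map_span, Set.image_image]
  congr 1
  have : {Q : ElemCube d | cubeDim Q = k ∧ cubeSet Q ⊆ X} = cellsOf k {Q | cubeSet Q ⊆ X} := by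
    ext Q; simp [cellsOf, and_comm]
  rw [this]
  refine Set.image_congr fun Q _ => ?_
  rw [boundaryHom_single, one_smul]

lemma boundaryMod_le (d q : ℕ) (X : Set (Fin d → ℝ)) : boundaryMod d q X ≤ cycleMod d q X := by
  refine le_inf ?_ ?_
  · unfold boundaryMod
    rw [map_chains, Submodule.span_le]
    rintro _ ⟨Q, hQ, rfl⟩
    change boundaryCube d Q ∈ chainsOn d q X
    unfold chainsOn
    rw [Finsupp.mem_supported]
    intro R hR
    obtain ⟨h1, h2⟩ := boundaryCube_support d Q R hR
    have hQ2 : cubeDim Q = q + 1 := hQ.2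
    have hQ1 : cubeSet Q ⊆ X := hQ.1
    exact ⟨by omega, (cubeSet_subset_iff.2 h2).trans hQ1⟩
  · rintro _ ⟨c, _, rfl⟩
    exact boundaryHom_boundaryHom d c

theorem betti_eq_GG (d q : ℕ) (X : Set (Fin d → ℝ)) (hX : {Q : ElemCube d | cubeSet Q ⊆ X}.Finite) :
    (betti d q X : ℝ) = GG d q {Q | cubeSet Q ⊆ X} := by
  have hset : ∀ k, {Q : ElemCube d | cubeDim Q = k ∧ cubeSet Q ⊆ X} =
      cellsOf k {Q | cubeSet Q ⊆ X} := by
    intro k; ext Q; simp [cellsOf, and_comm]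
  have hfin : ∀ k, (cellsOf k {Q : ElemCube d | cubeSet Q ⊆ X}).Finite :=
    fun k => cellsOf_finite k hX
  have fC : ∀ k, Module.Finite ℤ (chainsOn d k X) := by
    intro k
    unfold chainsOn
    rw [Finsupp.supported_eq_span_single, hset]
    exact Module.Finite.span_of_finite ℤ ((hfin k).image _)
  have rC : ∀ k, Module.finrank ℤ (chainsOn d k X) =
      (cellsOf k {Q : ElemCube d | cubeSet Q ⊆ X}).ncard := by
    intro k
    classical
    unfold chainsOn
    have := (hfin k).fintype
    rw [hset, (Finsupp.supportedEquivFinsupp (M := ℤ) (R := ℤ)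
      (cellsOf k {Q : ElemCube d | cubeSet Q ⊆ X})).finrank_eq, Module.finrank_finsupp_self,
      ← Nat.card_eq_fintype_card]
    rfl
  have := fC q
  have fZ : Module.Finite ℤ (cycleMod d q X) :=
    Module.Finite.of_injective (Submodule.inclusion (inf_le_left : cycleMod d q X ≤ chainsOn d q X))
      (Submodule.inclusion_injective _)
  have h1 := Submodule.finrank_quotient_add_finrank (R := ℤ)
    ((boundaryMod d q X).comap (cycleMod d q X).subtype)
  have h2 : Module.finrank ℤ ((boundaryMod d q X).comap (cycleMod d q X).subtype) =
      rk d (cellsOf (q + 1) {Q | cubeSet Q ⊆ X}) := by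
    rw [(Submodule.comapSubtypeEquivOfLe (boundaryMod_le d q X)).finrank_eq]
    unfold boundaryMod rk
    rw [map_chains]
  -- rank nullity for `∂` on `chainsOn`
  let φ : chainsOn d q X →ₗ[ℤ] CubChain d := (boundaryHom d).comp (chainsOn d q X).subtype
  have h3 := Submodule.finrank_quotient_add_finrank (R := ℤ) (LinearMap.ker φ)
  have h4 : Module.finrank ℤ (↥(chainsOn d q X) ⧸ LinearMap.ker φ) =
      rk d (cellsOf q {Q | cubeSet Q ⊆ X}) := by
    rw [(LinearMap.quotKerEquivRange φ).finrank_eq]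
    unfold rk
    rw [← map_chains]
    congr 2
    · simp only [φ]
      rw [LinearMap.range_comp, Submodule.range_subtype]
    all_goals
      simp only [φ]
      rw [LinearMap.range_comp, Submodule.range_subtype]
  have h5 : Module.finrank ℤ (LinearMap.ker φ) = Module.finrank ℤ (cycleMod d q X) := by
    rw [← Submodule.finrank_map_subtype_eq]
    have : Submodule.map (chainsOn d q X).subtype (LinearMap.ker φ) = cycleMod d q X := by
      simp only [φ]
      rw [LinearMap.ker_comp, Submodule.map_comap_subtype]
      rfl
    rw [this]
  have hb : betti d q X + rk d (cellsOf (q + 1) {Q | cubeSet Q ⊆ X}) =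
      Module.finrank ℤ (cycleMod d q X) := by
    rw [← h2, ← h1]; rfl
  have hz : rk d (cellsOf q {Q | cubeSet Q ⊆ X}) + Module.finrank ℤ (cycleMod d q X) =
      (cellsOf q {Q : ElemCube d | cubeSet Q ⊆ X}).ncard := by
    rw [← rC, ← h3, h4, h5]
  unfold GG
  have hb' : (betti d q X : ℝ) + rk d (cellsOf (q + 1) {Q | cubeSet Q ⊆ X}) =
      Module.finrank ℤ (cycleMod d q X) := by exact_mod_cast hb
  have hz' : (rk d (cellsOf q {Q | cubeSet Q ⊆ X}) : ℝ) + Module.finrank ℤ (cycleMod d q X) =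
      (cellsOf q {Q : ElemCube d | cubeSet Q ⊆ X}).ncard := by exact_mod_cast hz
  linarith

/-! ### Windows -/

/-- The set of open cubes. -/
def openCubes {d : ℕ} (t : ℝ) (ω : Config d) : Set (ElemCube d) := {Q | (ω Q : ℝ) ≤ t}

/-- Cells contained in the box of radius `r` around `c`. -/
def box {d : ℕ} (c : Fin d → ℤ) (r : ℤ) : Set (ElemCube d) :=
  {R | ∀ i, c i - r ≤ (R i).1 ∧ (R i).1 + (if (R i).2 then 1 else 0) ≤ c i + r}

/-- Cells of the window `W` covered by the cubes of `A`. -/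
def cov {d : ℕ} (W A : Set (ElemCube d)) : Set (ElemCube d) := {R ∈ W | ∃ Q ∈ A, cellLe R Q}

/-- The faces of a cube. -/
def faces {d : ℕ} (Q : ElemCube d) : Set (ElemCube d) := {R | cellLe R Q}

/-- The functional in the window `W`. -/
def gW (d q : ℕ) (W A : Set (ElemCube d)) : ℝ := GG d q (cov W A)

/-- The discrete derivative. -/
def DD {d : ℕ} (f : Set (ElemCube d) → ℝ) (Q : ElemCube d) (A : Set (ElemCube d)) : ℝ :=
  f (insert Q A) - f (A \ {Q})

lemma finite_of_bounded {d : ℕ} (S : Set (ElemCube d)) (a b : Fin d → ℤ)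
    (h : ∀ R ∈ S, ∀ i, a i ≤ (R i).1 ∧ (R i).1 ≤ b i) : S.Finite := by
  have : (Set.pi Set.univ (fun i => (Set.Icc (a i) (b i)) ×ˢ (Set.univ : Set Bool)) :
      Set (ElemCube d)).Finite :=
    Set.Finite.pi fun i => (Set.finite_Icc _ _).prod Set.finite_univ
  refine this.subset fun R hR i _ => ⟨h R hR i, trivial⟩

lemma ite_nonneg' (b : Bool) : (0 : ℤ) ≤ (if b then 1 else 0) := by split_ifs <;> norm_num
lemma ite_le_one' (b : Bool) : (if b then 1 else 0) ≤ (1 : ℤ) := by split_ifs <;> norm_num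

lemma box_finite {d : ℕ} (c : Fin d → ℤ) (r : ℤ) : (box c r).Finite := by
  refine finite_of_bounded _ (fun i => c i - r) (fun i => c i + r) fun R hR i => ?_
  have := hR i
  have h2 := ite_nonneg' (R i).2
  exact ⟨this.1, by omega⟩

lemma cov_subset {d : ℕ} (W A : Set (ElemCube d)) : cov W A ⊆ W := fun _ h => h.1

lemma cov_mono_left {d : ℕ} {W W' : Set (ElemCube d)} (h : W ⊆ W') (A : Set (ElemCube d)) :
    cov W A ⊆ cov W' A := fun _ hR => ⟨h hR.1, hR.2⟩

theorem bettiN_eq (d q n : ℕ) (t : ℝ) (ω : Config d) :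
    (bettiN d q n t ω : ℝ) = gW d q (box 0 n) (openCubes t ω) := by
  have h : {Q : ElemCube d | cubeSet Q ⊆ cubSet ω t ∩ lambda d n} =
      cov (box 0 n) (openCubes t ω) := by
    ext R
    change cubeSet R ⊆ cubSet ω t ∩ lambda d n ↔ _
    rw [Set.subset_inter_iff, cubeSet_subset_cubSet_iff, cubeSet_subset_lambda_iff]
    constructor
    · rintro ⟨⟨Q, h1, h2⟩, h3⟩
      exact ⟨fun i => by simpa using h3 i, Q, h1, h2⟩
    · rintro ⟨h3, Q, h1, h2⟩
      exact ⟨⟨Q, h1, h2⟩, fun i => by simpa using h3 i⟩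
  unfold bettiN gW
  rw [betti_eq_GG, h]
  rw [h]
  exact (box_finite _ _).subset (cov_subset _ _)

lemma cov_insert {d : ℕ} (W A : Set (ElemCube d)) (Q : ElemCube d) :
    cov W (insert Q A) = cov W (A \ {Q}) ∪ (W ∩ faces Q) := by
  ext R
  simp only [cov, faces, Set.mem_ofPred_eq, Set.mem_union, Set.mem_inter_iff, Set.mem_insert_iff,
    Set.mem_sdiff, Set.mem_singleton_iff]
  constructor
  · rintro ⟨h1, Q', h2 | h2, h3⟩
    · subst h2; exact Or.inr ⟨h1, h3⟩
    · by_cases h : Q' = Q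
      · subst h; exact Or.inr ⟨h1, h3⟩
      · exact Or.inl ⟨h1, Q', ⟨h2, h⟩, h3⟩
  · rintro (⟨h1, Q', ⟨h2, h⟩, h3⟩ | ⟨h1, h3⟩)
    · exact ⟨h1, Q', Or.inr h2, h3⟩
    · exact ⟨h1, Q, Or.inl rfl, h3⟩

lemma faces_sub {d : ℕ} (Q R : ElemCube d) (h : R ∈ faces Q) (i : Fin d) :
    (Q i).1 ≤ (R i).1 ∧ (R i).1 ≤ (Q i).1 + 1 := by
  have := h i
  have h2 := ite_nonneg' (R i).2
  have h3 := ite_le_one' (Q i).2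
  exact ⟨this.1, by omega⟩

lemma faces_finite {d : ℕ} (Q : ElemCube d) : (faces Q).Finite :=
  finite_of_bounded _ (fun i => (Q i).1) (fun i => (Q i).1 + 1) fun R hR i => faces_sub Q R hR i

lemma faces_ncard {d : ℕ} (Q : ElemCube d) : (faces Q).ncard ≤ 4 ^ d := by
  classical
  let F : Finset (ElemCube d) :=
    Fintype.piFinset fun i => (Finset.Icc (Q i).1 ((Q i).1 + 1)) ×ˢ (Finset.univ : Finset Bool)
  have h : faces Q ⊆ (F : Set (ElemCube d)) := by
    intro R hR
    simp only [F, Finset.mem_coe, Fintype.mem_piFinset, Finset.mem_product, Finset.mem_Icc,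
      Finset.mem_univ, and_true]
    exact faces_sub Q R hR
  refine (Set.ncard_le_ncard h (Finset.finite_toSet F)).trans ?_
  rw [Set.ncard_coe_finset]
  simp only [F, Fintype.card_piFinset, Finset.card_product, Int.card_Icc, Finset.card_univ,
    Fintype.card_bool]
  have : ∀ i : Fin d, ((Q i).1 + 1 + 1 - (Q i).1).toNat * 2 = 4 := by
    intro i
    have : ((Q i).1 + 1 + 1 - (Q i).1) = 2 := by ring
    rw [this]; rfl
  simp [this]

/-- A bound for all derivatives. -/
def CC (d : ℕ) : ℝ := 2 * 4 ^ d

lemma CC_pos (d : ℕ) : 0 < CC d := by unfold CC; positivity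

lemma DD_gW_eq {d : ℕ} (q : ℕ) (W : Set (ElemCube d)) (Q : ElemCube d)
    (A : Set (ElemCube d)) :
    DD (gW d q W) Q A = GG d q (cov W (A \ {Q}) ∪ (W ∩ faces Q)) - GG d q (cov W (A \ {Q})) := by
  unfold DD gW
  rw [cov_insert]

lemma DD_gW_bound {d : ℕ} (q : ℕ) {W : Set (ElemCube d)} (hW : W.Finite) (Q : ElemCube d)
    (A : Set (ElemCube d)) : |DD (gW d q W) Q A| ≤ CC d := by
  rw [DD_gW_eq]
  refine (GG_abs_diff_le d q (hW.subset (cov_subset _ _)) (hW.subset Set.inter_subset_left)).trans ?_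
  unfold CC
  have : (W ∩ faces Q).ncard ≤ 4 ^ d :=
    (Set.ncard_le_ncard Set.inter_subset_right (faces_finite Q)).trans (faces_ncard Q)
  have : ((W ∩ faces Q).ncard : ℝ) ≤ 4 ^ d := by exact_mod_cast this
  linarith

lemma DD_gW_zero {d : ℕ} (q : ℕ) {W : Set (ElemCube d)} {Q : ElemCube d}
    (h : ∀ R ∈ W, ¬ cellLe R Q) (A : Set (ElemCube d)) : DD (gW d q W) Q A = 0 := by
  rw [DD_gW_eq]
  have : W ∩ faces Q = ∅ := by
    ext R; simp only [Set.mem_inter_iff, Set.mem_empty_iff_false, iff_false, not_and]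
    exact fun hR => h R hR
  rw [this, Set.union_empty, sub_self]

lemma DD_gW_mono {d : ℕ} (q : ℕ) {W W' : Set (ElemCube d)} (hW : W'.Finite) (h : W ⊆ W')
    {Q : ElemCube d} (hQ : faces Q ⊆ W) (A : Set (ElemCube d)) :
    DD (gW d q W) Q A ≤ DD (gW d q W') Q A := by
  rw [DD_gW_eq, DD_gW_eq, Set.inter_eq_right.2 hQ, Set.inter_eq_right.2 (hQ.trans h)]
  refine GG_supermodular d q (hW.subset (cov_subset _ _)) (faces_finite Q) (cov_mono_left h _) ?_
  rintro R ⟨h1, h2⟩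
  exact ⟨hQ h1, h2.2⟩

/-- The cubes influencing the window `W`. -/
def nb {d : ℕ} (W : Set (ElemCube d)) : Set (ElemCube d) := {Q | ∃ R ∈ W, cellLe R Q}

/-- `f` depends only on the cubes in `K`. -/
def Dep {d : ℕ} {β : Type*} (f : Set (ElemCube d) → β) (K : Set (ElemCube d)) : Prop :=
  ∀ A B : Set (ElemCube d), (∀ Q ∈ K, (Q ∈ A ↔ Q ∈ B)) → f A = f B

lemma dep_gW {d : ℕ} (q : ℕ) (W : Set (ElemCube d)) : Dep (gW d q W) (nb W) := by
  intro A B h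
  unfold gW
  congr 1
  ext R
  constructor
  · rintro ⟨h1, Q, h2, h3⟩
    exact ⟨h1, Q, (h Q ⟨R, h1, h3⟩).1 h2, h3⟩
  · rintro ⟨h1, Q, h2, h3⟩
    exact ⟨h1, Q, (h Q ⟨R, h1, h3⟩).2 h2, h3⟩

lemma Dep.mono {d : ℕ} {β : Type*} {f : Set (ElemCube d) → β} {K L : Set (ElemCube d)}
    (hf : Dep f K) (h : K ⊆ L) : Dep f L := fun A B hAB => hf A B fun Q hQ => hAB Q (h hQ)

lemma cellLe_translate {d : ℕ} (x : Fin d → ℤ) (R Q : ElemCube d) :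
    cellLe (translateCube x R) (translateCube x Q) ↔ cellLe R Q := by
  simp only [cellLe, translateCube]
  refine forall_congr' fun i => ?_
  by_cases hR : (R i).2 = true <;> by_cases hQ : (Q i).2 = true <;> simp [hR, hQ] <;> omega

lemma cov_translate {d : ℕ} (x : Fin d → ℤ) (W A : Set (ElemCube d)) :
    cov (translateCube x '' W) (translateCube x '' A) = translateCube x '' (cov W A) := by
  ext R
  constructor
  · rintro ⟨⟨R, h1, rfl⟩, _, ⟨Q, h2, rfl⟩, h3⟩
    exact ⟨R, ⟨h1, Q, h2, (cellLe_translate x R Q).1 h3⟩, rfl⟩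
  · rintro ⟨R, ⟨h1, Q, h2, h3⟩, rfl⟩
    exact ⟨⟨R, h1, rfl⟩, _, ⟨Q, h2, rfl⟩, (cellLe_translate x R Q).2 h3⟩

lemma gW_translate {d : ℕ} (q : ℕ) (x : Fin d → ℤ) (W A : Set (ElemCube d)) :
    gW d q (translateCube x '' W) (translateCube x '' A) = gW d q W A := by
  unfold gW
  rw [cov_translate, GG_translate]

lemma DD_gW_translate {d : ℕ} (q : ℕ) (x : Fin d → ℤ) (W A : Set (ElemCube d)) (Q : ElemCube d) :
    DD (gW d q (translateCube x '' W)) (translateCube x Q) (translateCube x '' A) =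
      DD (gW d q W) Q A := by
  unfold DD
  rw [← Set.image_insert_eq, ← Set.image_singleton,
    ← Set.image_sdiff (translateCube_injective x), gW_translate, gW_translate]

lemma box_translate {d : ℕ} (x c : Fin d → ℤ) (r : ℤ) :
    translateCube x '' (box c r) = box (c + x) r := by
  ext R
  constructor
  · rintro ⟨R, h, rfl⟩ i
    have := h i
    simp only [translateCube, Pi.add_apply]
    revert this
    by_cases hR : (R i).2 = true <;> simp [hR] <;> omega
  · intro h
    refine ⟨translateCube (-x) R, fun i => ?_, translateCube_cancel_neg x R⟩
    have := h i
    simp only [translateCube, Pi.add_apply, Pi.neg_apply] at this ⊢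
    revert this
    by_cases hR : (R i).2 = true <;> simp [hR] <;> omega

lemma openCubes_shift {d : ℕ} (t : ℝ) (x : Fin d → ℤ) (ω : Config d) :
    openCubes t (configShift x ω) = translateCube x '' (openCubes t ω) := by
  ext R
  constructor
  · intro h
    exact ⟨translateCube (-x) R, h, translateCube_cancel_neg x R⟩
  · rintro ⟨Q, h, rfl⟩
    change ((ω (translateCube (-x) (translateCube x Q)) : unitInterval) : ℝ) ≤ t
    rw [translateCube_neg_cancel]
    exact h

lemma box_subset_box {d : ℕ} {c c' : Fin d → ℤ} {r r' : ℤ}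
    (h : ∀ i, |c i - c' i| ≤ r' - r) : box c r ⊆ box c' r' := by
  intro R hR i
  have h1 := hR i
  have h2 := abs_le.1 (h i)
  constructor <;> omega

lemma faces_subset_box {d : ℕ} (Q : ElemCube d) {m : ℤ} (hm : 1 ≤ m) :
    faces Q ⊆ box (fun i => (Q i).1) m := by
  intro R hR i
  have h1 := hR i
  have h3 := ite_le_one' (Q i).2
  dsimp only
  constructor <;> linarith

/-! ### Probability -/

section prob

variable {d : ℕ} {t : ℝ} {P : Measure (Config d)} [IsProbabilityMeasure P]

/-- The state of the cube `Q`. -/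
def eta (t : ℝ) (Q : ElemCube d) (ω : Config d) : Prop := Q ∈ openCubes t ω

lemma eta_measurable (t : ℝ) (Q : ElemCube d) : Measurable (eta t Q) := by
  refine measurable_to_prop ?_
  have h : Measurable fun ω : Config d => (ω Q : ℝ) :=
    measurable_subtype_coe.comp (measurable_pi_apply Q)
  have : (eta t Q) ⁻¹' {True} = {ω : Config d | (ω Q : ℝ) ≤ t} := by
    ext ω
    simp [eta, openCubes]
  rw [this]
  exact measurableSet_le h measurable_const

lemma eta_indep (hprod : ProbabilityTheory.iIndepFun
      (fun (Q : ElemCube d) (ω : Config d) => ω Q) P) (t : ℝ) :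
    ProbabilityTheory.iIndepFun (fun (Q : ElemCube d) => eta t Q) P := by
  refine hprod.comp (fun _ x => ((x : ℝ) ≤ t)) fun Q => ?_
  refine measurable_to_prop ?_
  have : (fun x : unitInterval => ((x : ℝ) ≤ t)) ⁻¹' {True} = {x : unitInterval | (x : ℝ) ≤ t} := by
    ext x
    simp
  rw [this]
  exact measurableSet_le measurable_subtype_coe measurable_const

/-- Rebuild the functional from the pattern. -/
def patF {β : Type*} (f : Set (ElemCube d) → β) (K : Finset (ElemCube d)) (p : K → Prop) : β :=
  f {Q | ∃ h : Q ∈ K, p ⟨Q, h⟩}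

lemma patF_eq {β : Type*} {f : Set (ElemCube d) → β} {K : Finset (ElemCube d)}
    (hf : Dep f (K : Set (ElemCube d))) (t : ℝ) :
    (fun ω : Config d => f (openCubes t ω)) =
      patF f K ∘ fun ω (Q : K) => eta t (Q : ElemCube d) ω := by
  funext ω
  refine hf _ _ fun Q hQ => ?_
  have hQ' : Q ∈ K := hQ
  simp [eta, hQ']

lemma pat_measurable (K : Finset (ElemCube d)) (t : ℝ) :
    Measurable (fun (ω : Config d) (Q : K) => eta t (Q : ElemCube d) ω) :=
  measurable_pi_lambda _ fun Q => eta_measurable t _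

lemma dep_measurable {β : Type*} [MeasurableSpace β] {f : Set (ElemCube d) → β}
    {K : Finset (ElemCube d)} (hf : Dep f (K : Set (ElemCube d))) (t : ℝ) :
    Measurable (fun ω : Config d => f (openCubes t ω)) := by
  rw [patF_eq hf t]
  exact (Measurable.of_discrete).comp (pat_measurable K t)

lemma dep_stronglyMeasurable {β : Type*} [TopologicalSpace β] {f : Set (ElemCube d) → β}
    {K : Finset (ElemCube d)} (hf : Dep f (K : Set (ElemCube d))) (t : ℝ) :
    StronglyMeasurable (fun ω : Config d => f (openCubes t ω)) := by
  rw [patF_eq hf t]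
  exact (StronglyMeasurable.of_discrete).comp_measurable (pat_measurable K t)

lemma dep_bounded {β : Type*} [NormedAddCommGroup β] {f : Set (ElemCube d) → β}
    {K : Finset (ElemCube d)} (hf : Dep f (K : Set (ElemCube d))) (t : ℝ) :
    ∃ C : ℝ, ∀ ω : Config d, ‖f (openCubes t ω)‖ ≤ C := by
  obtain ⟨C, hC⟩ := (Set.finite_range (fun p : K → Prop => ‖patF f K p‖)).bddAbove
  refine ⟨C, fun ω => ?_⟩
  have := congrFun (patF_eq hf t) ω
  change f (openCubes t ω) = _ at this
  rw [this]
  exact hC ⟨_, rfl⟩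

lemma dep_integrable {β : Type*} [NormedAddCommGroup β] {f : Set (ElemCube d) → β}
    {K : Finset (ElemCube d)} (hf : Dep f (K : Set (ElemCube d))) :
    Integrable (fun ω : Config d => f (openCubes t ω)) P := by
  obtain ⟨C, hC⟩ := dep_bounded hf t
  exact Integrable.of_bound (dep_stronglyMeasurable hf t).aestronglyMeasurable C
    (Eventually.of_forall hC)

lemma dep_indep (hprod : ProbabilityTheory.iIndepFun
      (fun (Q : ElemCube d) (ω : Config d) => ω Q) P)
    {β γ : Type*} [MeasurableSpace β] [MeasurableSpace γ]
    {f : Set (ElemCube d) → β} {g : Set (ElemCube d) → γ}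
    {K L : Finset (ElemCube d)} (hf : Dep f (K : Set (ElemCube d)))
    (hg : Dep g (L : Set (ElemCube d))) (hKL : Disjoint K L) :
    ProbabilityTheory.IndepFun (fun ω : Config d => f (openCubes t ω))
      (fun ω => g (openCubes t ω)) P := by
  rw [patF_eq hf t, patF_eq hg t]
  exact ((eta_indep hprod t).indepFun_finset K L hKL (eta_measurable t)).comp
    Measurable.of_discrete Measurable.of_discrete

open Classical in
/-- The indicator of `Q` being open. -/
def ind (Q : ElemCube d) (A : Set (ElemCube d)) : ℝ := if Q ∈ A then 1 else 0

lemma dep_ind (Q : ElemCube d) : Dep (ind Q) (({Q} : Finset (ElemCube d)) : Set (ElemCube d)) := by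
  intro A B h
  have := h Q (by simp)
  by_cases hA : Q ∈ A
  · simp [ind, hA, this.1 hA]
  · simp [ind, hA, mt this.2 hA]

lemma dep_insert {β : Type*} {f : Set (ElemCube d) → β} {K : Set (ElemCube d)}
    (Q : ElemCube d) (hf : Dep f (insert Q K)) : Dep (fun A => f (insert Q A)) K := by
  intro A B h
  refine hf _ _ fun R hR => ?_
  rcases hR with rfl | hR
  · simp
  · simp [h R hR]

lemma dep_delete {β : Type*} {f : Set (ElemCube d) → β} {K : Set (ElemCube d)}
    (Q : ElemCube d) (hf : Dep f (insert Q K)) : Dep (fun A => f (A \ {Q})) K := by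
  intro A B h
  refine hf _ _ fun R hR => ?_
  rcases hR with rfl | hR
  · simp
  · simp [h R hR]

lemma dep_DD {f : Set (ElemCube d) → ℝ} {K : Set (ElemCube d)}
    (Q : ElemCube d) (hf : Dep f K) : Dep (DD f Q) K := by
  have h := hf.mono (Set.subset_insert Q K)
  intro A B hAB
  unfold DD
  have h1 := dep_insert Q h A B hAB
  have h2 := dep_delete Q h A B hAB
  simp only at h1 h2
  rw [h1, h2]

lemma Dep.comp {β γ : Type*} {f : Set (ElemCube d) → β} {K : Set (ElemCube d)} (hf : Dep f K)
    (g : β → γ) : Dep (fun A => g (f A)) K := fun A B h => congrArg g (hf A B h)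

lemma Dep.comp₂ {β γ δ : Type*} {f : Set (ElemCube d) → β} {f' : Set (ElemCube d) → γ}
    {K : Set (ElemCube d)} (hf : Dep f K) (hf' : Dep f' K)
    (g : β → γ → δ) : Dep (fun A => g (f A) (f' A)) K := fun A B h => by
  simp only [hf A B h, hf' A B h]

variable (t P) in
/-- The probability that `Q` is open. -/
def pQ (Q : ElemCube d) : ℝ := ∫ ω, ind Q (openCubes t ω) ∂P

lemma pQ_nonneg (Q : ElemCube d) : 0 ≤ pQ t P Q :=
  integral_nonneg fun ω => by simp only [ind]; split_ifs <;> norm_num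

lemma pQ_le_one (Q : ElemCube d) : pQ t P Q ≤ 1 := by
  have : pQ t P Q ≤ ∫ ω : Config d, (1 : ℝ) ∂P := by
    refine integral_mono (dep_integrable (dep_ind Q)) (integrable_const _) fun ω => ?_
    simp only [ind]; split_ifs <;> norm_num
  simpa using this

lemma one_step (hprod : ProbabilityTheory.iIndepFun
      (fun (Q : ElemCube d) (ω : Config d) => ω Q) P) {f : Set (ElemCube d) → ℝ}
    {K : Finset (ElemCube d)} {Q : ElemCube d} (hQ : Q ∉ K)
    (hf : Dep f (insert Q (K : Set (ElemCube d)))) :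
    ∫ ω, f (openCubes t ω) ∂P = ∫ ω, (pQ t P Q * f (insert Q (openCubes t ω)) +
      (1 - pQ t P Q) * f (openCubes t ω \ {Q})) ∂P := by
  have hi := dep_insert Q hf
  have hd := dep_delete Q hf
  have hdis : Disjoint ({Q} : Finset (ElemCube d)) K := by simpa using hQ
  have e1 : ∀ ω, f (openCubes t ω) = ind Q (openCubes t ω) * f (insert Q (openCubes t ω)) +
      (f (openCubes t ω \ {Q}) - ind Q (openCubes t ω) * f (openCubes t ω \ {Q})) := by
    intro ω
    by_cases h : Q ∈ openCubes t ω
    · simp [ind, h]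
    · simp [ind, h]
  have I1 := dep_integrable (t := t) (P := P) hi
  have I2 := dep_integrable (t := t) (P := P) hd
  have X1 := (dep_indep (t := t) hprod (dep_ind Q) hi hdis)
  have X2 := (dep_indep (t := t) hprod (dep_ind Q) hd hdis)
  have J := dep_integrable (t := t) (P := P) (dep_ind Q)
  have M1 := X1.integral_fun_mul_eq_mul_integral J.aestronglyMeasurable I1.aestronglyMeasurable
  have M2 := X2.integral_fun_mul_eq_mul_integral J.aestronglyMeasurable I2.aestronglyMeasurable
  have J1 : Integrable (fun ω => ind Q (openCubes t ω) * f (insert Q (openCubes t ω))) P :=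
    X1.integrable_mul J I1
  have J2 : Integrable (fun ω => ind Q (openCubes t ω) * f (openCubes t ω \ {Q})) P :=
    X2.integrable_mul J I2
  have J3 : Integrable (fun ω => f (openCubes t ω \ {Q}) -
      ind Q (openCubes t ω) * f (openCubes t ω \ {Q})) P := I2.sub J2
  simp_rw [e1]
  rw [integral_add J1 J3, integral_sub I2 J2, integral_add (I1.const_mul _) (I2.const_mul _),
    integral_const_mul, integral_const_mul]
  rw [M1, M2]
  unfold pQ
  ring

theorem efron_stein (hprod : ProbabilityTheory.iIndepFun
      (fun (Q : ElemCube d) (ω : Config d) => ω Q) P)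
    (K : Finset (ElemCube d)) :
    ∀ f : Set (ElemCube d) → ℝ, Dep f (K : Set (ElemCube d)) →
    ∫ ω, (f (openCubes t ω)) ^ 2 ∂P - (∫ ω, f (openCubes t ω) ∂P) ^ 2 ≤
      ∑ Q ∈ K, ∫ ω, (DD f Q (openCubes t ω)) ^ 2 ∂P := by
  classical
  induction K using Finset.induction_on with
  | empty =>
    intro f hf
    have : ∀ ω, f (openCubes t ω) = f ∅ := fun ω => hf _ _ (by simp)
    simp [this]
  | insert Q K hQ ih =>
    intro f hf
    rw [Finset.coe_insert] at hf
    set p := pQ t P Q with hp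
    have hp0 : 0 ≤ p := pQ_nonneg Q
    have hp1 : p ≤ 1 := pQ_le_one Q
    have hi := dep_insert Q hf
    have hd := dep_delete Q hf
    let h : Set (ElemCube d) → ℝ := fun A => p * f (insert Q A) + (1 - p) * f (A \ {Q})
    have hh : Dep h (K : Set (ElemCube d)) := hi.comp₂ hd fun a b => p * a + (1 - p) * b
    have E1 : ∫ ω, f (openCubes t ω) ∂P = ∫ ω, h (openCubes t ω) ∂P := one_step hprod hQ hf
    have E2 : ∫ ω, (f (openCubes t ω)) ^ 2 ∂P = ∫ ω, (p * f (insert Q (openCubes t ω)) ^ 2 +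
        (1 - p) * f (openCubes t ω \ {Q}) ^ 2) ∂P :=
      one_step (f := fun A => f A ^ 2) hprod hQ (hf.comp fun x => x ^ 2)
    have DQ : Dep (DD f Q) (K : Set (ElemCube d)) := hi.comp₂ hd fun a b => a - b
    have E3 : ∫ ω, (f (openCubes t ω)) ^ 2 ∂P ≤ ∫ ω, (h (openCubes t ω)) ^ 2 ∂P +
        ∫ ω, (DD f Q (openCubes t ω)) ^ 2 ∂P := by
      rw [E2, ← integral_add (dep_integrable (hh.comp fun x => x ^ 2))
        (dep_integrable (DQ.comp fun x => x ^ 2))]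
      refine integral_mono (dep_integrable (hi.comp₂ hd fun a b => p * a ^ 2 + (1 - p) * b ^ 2))
        ((dep_integrable (hh.comp fun x => x ^ 2)).add
          (dep_integrable (DQ.comp fun x => x ^ 2))) fun ω => ?_
      simp only [h, DD]
      have : 0 ≤ (1 - p * (1 - p)) *
          (f (insert Q (openCubes t ω)) - f (openCubes t ω \ {Q})) ^ 2 := by
        have : 0 ≤ 1 - p * (1 - p) := by nlinarith
        positivity
      nlinarith
    have E4 : ∀ R ∈ K, ∫ ω, (DD h R (openCubes t ω)) ^ 2 ∂P ≤
        ∫ ω, (DD f R (openCubes t ω)) ^ 2 ∂P := by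
      intro R hR
      have hne : R ≠ Q := fun h => hQ (h ▸ hR)
      have DR := dep_DD R hf
      have := one_step (t := t) (f := fun A => (DD f R A) ^ 2) hprod hQ (DR.comp fun x => x ^ 2)
      rw [this]
      refine integral_mono (dep_integrable ((dep_DD R hh).comp fun x => x ^ 2))
        (dep_integrable ((dep_insert Q DR).comp₂ (dep_delete Q DR)
          fun a b => p * a ^ 2 + (1 - p) * b ^ 2)) fun ω => ?_
      have e : DD h R (openCubes t ω) = p * DD f R (insert Q (openCubes t ω)) +
          (1 - p) * DD f R (openCubes t ω \ {Q}) := by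
        simp only [DD, h]
        have s1 : insert Q (insert R (openCubes t ω)) = insert R (insert Q (openCubes t ω)) :=
          Set.insert_comm _ _ _
        have s2 : insert Q (openCubes t ω \ {R}) = insert Q (openCubes t ω) \ {R} := by
          ext S
          simp only [Set.mem_insert_iff, Set.mem_sdiff, Set.mem_singleton_iff]
          constructor
          · rintro (rfl | h)
            · exact ⟨Or.inl rfl, hne.symm⟩
            · exact ⟨Or.inr h.1, h.2⟩
          · rintro ⟨h | h, h'⟩
            · exact Or.inl h
            · exact Or.inr ⟨h, h'⟩
        have s3 : insert R (openCubes t ω) \ {Q} = insert R (openCubes t ω \ {Q}) := by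
          ext S
          simp only [Set.mem_insert_iff, Set.mem_sdiff, Set.mem_singleton_iff]
          constructor
          · rintro ⟨h | h, h'⟩
            · exact Or.inl h
            · exact Or.inr ⟨h, h'⟩
          · rintro (rfl | h)
            · exact ⟨Or.inl rfl, hne⟩
            · exact ⟨Or.inr h.1, h.2⟩
        have s4 : (openCubes t ω \ {R}) \ {Q} = (openCubes t ω \ {Q}) \ {R} := by
          ext S
          simp only [Set.mem_sdiff, Set.mem_singleton_iff]
          tauto
        rw [s1, s2, s3, s4]
        ring
      change (DD h R (openCubes t ω)) ^ 2 ≤ p * DD f R (insert Q (openCubes t ω)) ^ 2 +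
          (1 - p) * DD f R (openCubes t ω \ {Q}) ^ 2
      rw [e]
      have : 0 ≤ (p * (1 - p)) * (DD f R (insert Q (openCubes t ω)) -
        DD f R (openCubes t ω \ {Q})) ^ 2 := by
        have : 0 ≤ 1 - p := by linarith
        positivity
      nlinarith
    have E5 := ih h hh
    have E6 := Finset.sum_le_sum E4
    rw [Finset.sum_insert hQ, E1]
    linarith

lemma configShift_measurable (x : Fin d → ℤ) : Measurable (configShift x : Config d → Config d) :=
  measurable_pi_lambda _ fun Q => measurable_pi_apply _

lemma integral_shift (hstat : Stationary P) {β : Type*} [NormedAddCommGroup β] [NormedSpace ℝ β]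
    {f : Set (ElemCube d) → β} {K : Finset (ElemCube d)} (hf : Dep f (K : Set (ElemCube d)))
    (x : Fin d → ℤ) :
    ∫ ω, f (translateCube x '' openCubes t ω) ∂P = ∫ ω, f (openCubes t ω) ∂P := by
  have hm : Measure.map (configShift x) P = P := by
    ext s hs
    rw [Measure.map_apply (configShift_measurable x) hs, hstat x s hs]
  conv_rhs => rw [← hm]
  rw [integral_map (configShift_measurable x).aemeasurable
    (dep_stronglyMeasurable hf t).aestronglyMeasurable]
  simp only [openCubes_shift]

end prob

/-! ### Blocks -/

section blocks

variable {d : ℕ}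

/-- Number of blocks per direction. -/
def nbl (n r : ℕ) : ℕ := 2 * n / (2 * r + 2)

/-- Centers of the blocks. -/
def cz (n r : ℕ) (z : Fin d → Fin (nbl n r)) (i : Fin d) : ℤ :=
  -(n : ℤ) + (2 * r + 2) * ((z i : ℕ) : ℤ) + (r + 1)

/-- The blocks. -/
def blk (n r : ℕ) (z : Fin d → Fin (nbl n r)) : Set (ElemCube d) := box (cz n r z) r

lemma nbl_mul_le (n r : ℕ) : (2 * r + 2) * nbl n r ≤ 2 * n := Nat.mul_div_le _ _

lemma z_bound (n r : ℕ) (j : Fin (nbl n r)) :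
    (2 * (r : ℤ) + 2) * ((j : ℕ) : ℤ) + (2 * r + 2) ≤ 2 * n := by
  have h1 := nbl_mul_le n r
  have h2 : (j : ℕ) + 1 ≤ nbl n r := j.2
  have h3 := (Nat.mul_le_mul_left (2 * r + 2) h2).trans h1
  have h4 : ((2 * r + 2) * ((j : ℕ) + 1) : ℤ) ≤ 2 * n := by exact_mod_cast h3
  linarith

lemma z_nonneg (n r : ℕ) (j : Fin (nbl n r)) : 0 ≤ (2 * (r : ℤ) + 2) * ((j : ℕ) : ℤ) := by
  positivity

lemma blk_subset (n r : ℕ) (z : Fin d → Fin (nbl n r)) : blk n r z ⊆ box 0 n := by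
  refine box_subset_box fun i => ?_
  have h1 := z_bound n r (z i)
  have h2 := z_nonneg n r (z i)
  simp only [cz, Pi.zero_apply, sub_zero]
  rw [abs_le]
  constructor <;> linarith

lemma blk_coord (n r : ℕ) (z : Fin d → Fin (nbl n r)) {R : ElemCube d} (hR : R ∈ blk n r z)
    (i : Fin d) : -(n : ℤ) + (2 * r + 2) * ((z i : ℕ) : ℤ) + 1 ≤ (R i).1 ∧
      (R i).1 ≤ -(n : ℤ) + (2 * r + 2) * ((z i : ℕ) : ℤ) + (2 * r + 1) := by
  have h := hR i
  have h2 := ite_nonneg' (R i).2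
  simp only [cz] at h
  constructor <;> linarith

lemma blk_unique (n r : ℕ) {z z' : Fin d → Fin (nbl n r)} {R R' Q : ElemCube d}
    (hR : R ∈ blk n r z) (hR' : R' ∈ blk n r z') (h : cellLe R Q) (h' : cellLe R' Q) :
    z = z' := by
  funext i
  have a := blk_coord n r z hR i
  have a' := blk_coord n r z' hR' i
  have b := faces_sub Q R h i
  have b' := faces_sub Q R' h' i
  by_contra hne
  have hne' : ((z i : ℕ) : ℤ) ≠ ((z' i : ℕ) : ℤ) := by
    intro hh
    apply hne
    ext
    exact_mod_cast hh
  rcases lt_or_gt_of_ne hne' with hl | hl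
  · have : (2 * (r : ℤ) + 2) * (((z i : ℕ) : ℤ) + 1) ≤ (2 * r + 2) * ((z' i : ℕ) : ℤ) :=
      mul_le_mul_of_nonneg_left hl (by positivity)
    linarith
  · have : (2 * (r : ℤ) + 2) * (((z' i : ℕ) : ℤ) + 1) ≤ (2 * r + 2) * ((z i : ℕ) : ℤ) :=
      mul_le_mul_of_nonneg_left hl (by positivity)
    linarith

/-- The cubes that may influence the window. -/
def Kn (d n : ℕ) : Finset (ElemCube d) :=
  Fintype.piFinset fun _ => (Finset.Icc (-(n : ℤ) - 1) n) ×ˢ (Finset.univ : Finset Bool)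

lemma mem_Kn {n : ℕ} {Q : ElemCube d} :
    Q ∈ Kn d n ↔ ∀ i, -(n : ℤ) - 1 ≤ (Q i).1 ∧ (Q i).1 ≤ n := by
  simp [Kn, Fintype.mem_piFinset]

lemma card_Kn (d n : ℕ) : (Kn d n).card = ((2 * n + 2) * 2) ^ d := by
  simp only [Kn, Fintype.card_piFinset, Finset.card_product, Int.card_Icc, Finset.card_univ,
    Fintype.card_bool, Finset.prod_const, Fintype.card_fin]
  congr 2
  omega

lemma nb_box_subset (n : ℕ) : nb (box (0 : Fin d → ℤ) n) ⊆ (Kn d n : Set (ElemCube d)) := by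
  rintro Q ⟨R, hR, h⟩
  refine mem_Kn.2 fun i => ?_
  have h1 := hR i
  have h2 := faces_sub Q R h i
  have h3 := ite_nonneg' (R i).2
  simp only [Pi.zero_apply] at h1
  constructor <;> linarith

lemma nb_mono {W W' : Set (ElemCube d)} (h : W ⊆ W') : nb W ⊆ nb W' :=
  fun _ ⟨R, hR, hQ⟩ => ⟨R, h hR, hQ⟩

/-- The difference between the window functional and the sum over the blocks. -/
def Dif (d q n r : ℕ) (A : Set (ElemCube d)) : ℝ :=
  gW d q (box 0 n) A - ∑ z : Fin d → Fin (nbl n r), gW d q (blk n r z) A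

lemma dep_Dif (q n r : ℕ) : Dep (Dif d q n r) (Kn d n : Set (ElemCube d)) := by
  intro A B h
  unfold Dif
  have h1 := ((dep_gW q (box (0 : Fin d → ℤ) n)).mono (nb_box_subset n)) A B h
  have h2 : ∀ z : Fin d → Fin (nbl n r), gW d q (blk n r z) A = gW d q (blk n r z) B := fun z =>
    ((dep_gW q (blk n r z)).mono ((nb_mono (blk_subset n r z)).trans (nb_box_subset n))) A B h
  rw [h1, Finset.sum_congr rfl fun z _ => h2 z]

lemma DD_Dif (q n r : ℕ) (Q : ElemCube d) (A : Set (ElemCube d)) :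
    DD (Dif d q n r) Q A = DD (gW d q (box 0 n)) Q A -
      ∑ z : Fin d → Fin (nbl n r), DD (gW d q (blk n r z)) Q A := by
  unfold DD Dif
  rw [Finset.sum_sub_distrib]
  ring

lemma sum_DD_of_mem (q n r : ℕ) {Q R : ElemCube d} {z : Fin d → Fin (nbl n r)}
    (hR : R ∈ blk n r z) (h : cellLe R Q) (A : Set (ElemCube d)) :
    ∑ z : Fin d → Fin (nbl n r), DD (gW d q (blk n r z)) Q A = DD (gW d q (blk n r z)) Q A := by
  refine Finset.sum_eq_single z (fun z' _ hz' => ?_) (fun h => absurd (Finset.mem_univ _) h)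
  exact DD_gW_zero q (fun R' hR' h' => hz' (blk_unique n r hR' hR h' h)) A

lemma DD_Dif_bound (q n r : ℕ) (Q : ElemCube d) (A : Set (ElemCube d)) :
    |DD (Dif d q n r) Q A| ≤ 2 * CC d := by
  rw [DD_Dif]
  have h1 := DD_gW_bound q (box_finite (0 : Fin d → ℤ) n) Q A
  have h2 : |∑ z : Fin d → Fin (nbl n r), DD (gW d q (blk n r z)) Q A| ≤ CC d := by
    by_cases h : ∃ z : Fin d → Fin (nbl n r), ∃ R ∈ blk n r z, cellLe R Q
    · obtain ⟨z, R, hR, hQ⟩ := h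
      rw [sum_DD_of_mem q n r hR hQ]
      exact DD_gW_bound q (box_finite _ _) Q A
    · push Not at h
      rw [Finset.sum_eq_zero fun z _ => DD_gW_zero q (h z) A]
      simpa using (CC_pos d).le
  rw [abs_le] at *
  constructor <;> linarith

variable {t : ℝ} {P : Measure (Config d)} [IsProbabilityMeasure P]

variable (t P) in
/-- Expected derivative in a box of radius `m`. -/
def am (q m : ℕ) (s : Fin d → Bool) : ℝ :=
  ∫ ω, DD (gW d q (box 0 m)) (fun i => (0, s i)) (openCubes t ω) ∂P

lemma box_dep (q : ℕ) (c : Fin d → ℤ) (r : ℤ) :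
    ∃ K : Finset (ElemCube d), Dep (gW d q (box c r)) (K : Set (ElemCube d)) := by
  have : (nb (box c r)).Finite := by
    refine finite_of_bounded _ (fun i => c i - r - 1) (fun i => c i + r) ?_
    rintro Q ⟨R, hR, h⟩ i
    have h1 := hR i
    have h2 := faces_sub Q R h i
    have h3 := ite_nonneg' (R i).2
    constructor <;> linarith
  refine ⟨this.toFinset, ?_⟩
  rw [Set.Finite.coe_toFinset]
  exact dep_gW q _

lemma integrable_DD_box (q : ℕ) (c : Fin d → ℤ) (r : ℤ) (Q : ElemCube d) :
    Integrable (fun ω => DD (gW d q (box c r)) Q (openCubes t ω)) P := by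
  obtain ⟨K, hK⟩ := box_dep q c r
  exact dep_integrable (dep_DD Q hK)

lemma am_shift (hstat : Stationary P) (q m : ℕ) (Q : ElemCube d) :
    ∫ ω, DD (gW d q (box (fun i => (Q i).1) m)) Q (openCubes t ω) ∂P =
      am t P q m (fun i => (Q i).2) := by
  obtain ⟨K, hK⟩ := box_dep q (fun i => (Q i).1) m
  rw [← integral_shift hstat (dep_DD Q hK) (fun i => (Q i).1)]
  unfold am
  congr 1
  funext ω
  have e1 : box (fun i => (Q i).1) m = translateCube (fun i => (Q i).1) '' (box 0 (m : ℤ)) := by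
    rw [box_translate, zero_add]
  have e2 : Q = translateCube (fun i => (Q i).1) (fun i => (0, (Q i).2)) := by
    funext i
    simp [translateCube]
  rw [e1]
  nth_rw 2 [e2]
  exact DD_gW_translate q _ _ _ _

lemma am_mono (q : ℕ) {m m' : ℕ} (hm : 1 ≤ m) (h : m ≤ m') (s : Fin d → Bool) :
    am t P q m s ≤ am t P q m' s := by
  refine integral_mono (integrable_DD_box q _ _ _) (integrable_DD_box q _ _ _) fun ω => ?_
  refine DD_gW_mono q (box_finite _ _) (box_subset_box fun i => ?_) ?_ _
  · simp; exact h
  · exact faces_subset_box (fun i => (0, s i)) (by exact_mod_cast hm)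

lemma am_le (q m : ℕ) (s : Fin d → Bool) : am t P q m s ≤ CC d := by
  have : am t P q m s ≤ ∫ ω : Config d, CC d ∂P :=
    integral_mono (integrable_DD_box q _ _ _) (integrable_const _) fun ω =>
      (abs_le.1 (DD_gW_bound q (box_finite _ _) _ _)).2
  simpa using this

variable (t P) in
lemma am_cauchy (q : ℕ) {ε : ℝ} (hε : 0 < ε) :
    ∃ m : ℕ, 1 ≤ m ∧ ∀ N, m ≤ N → ∀ s : Fin d → Bool, am t P q N s - am t P q m s ≤ ε := by
  have key : ∀ s : Fin d → Bool, ∀ᶠ m in atTop, ∀ N, m ≤ N → am t P q N s - am t P q m s ≤ ε := by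
    intro s
    let u : ℕ → ℝ := fun m => am t P q (m + 1) s
    have hu : Monotone u := fun m m' h => am_mono q (by omega) (by omega) s
    have hb : BddAbove (Set.range u) := ⟨CC d, by rintro _ ⟨m, rfl⟩; exact am_le q _ s⟩
    have ht := tendsto_atTop_ciSup hu hb
    have h1 := ht.eventually (lt_mem_nhds (sub_lt_self (⨆ i, u i) hε))
    obtain ⟨M, hM⟩ := eventually_atTop.1 h1
    refine eventually_atTop.2 ⟨M + 1, fun m hm N hN => ?_⟩
    obtain ⟨m, rfl⟩ : ∃ k, m = k + 1 := ⟨m - 1, by omega⟩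
    obtain ⟨N, rfl⟩ : ∃ k, N = k + 1 := ⟨N - 1, by omega⟩
    have a1 := hM m (by omega)
    have a2 := le_ciSup hb N
    simp only [u] at a1 a2
    linarith
  obtain ⟨m, h1, h2⟩ := ((eventually_all.2 key).and (eventually_ge_atTop 1)).exists
  exact ⟨m, h2, fun N hN s => h1 s N hN⟩

/-- Good cubes. -/
def Good (n r m : ℕ) (Q : ElemCube d) : Prop :=
  ∃ z : Fin d → Fin (nbl n r), ∀ i, |(Q i).1 - cz n r z i| ≤ (r : ℤ) - m

lemma good_bound (hstat : Stationary P) (q : ℕ) {n r m : ℕ} (hm : 1 ≤ m) {ε : ℝ}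
    (hε : ∀ N, m ≤ N → ∀ s : Fin d → Bool, am t P q N s - am t P q m s ≤ ε)
    (hn : m ≤ 2 * n) {Q : ElemCube d} (hQ : Good n r m Q) :
    ∫ ω, (DD (Dif d q n r) Q (openCubes t ω)) ^ 2 ∂P ≤ 2 * CC d * ε := by
  obtain ⟨z, hz⟩ := hQ
  have s0 : faces Q ⊆ box (fun i => (Q i).1) m := faces_subset_box Q (by exact_mod_cast hm)
  have s1 : box (fun i => (Q i).1) m ⊆ blk n r z := box_subset_box hz
  have s2 : blk n r z ⊆ box 0 n := blk_subset n r z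
  have hQm : Q ∈ blk n r z := s1 (s0 (cellLe_refl Q))
  have s3 : box 0 (n : ℤ) ⊆ box (fun i => (Q i).1) ((2 * n : ℕ) : ℤ) := by
    refine box_subset_box fun i => ?_
    have h1 := s2 hQm i
    have h2 := ite_nonneg' (Q i).2
    simp only [Pi.zero_apply] at h1 ⊢
    push_cast
    rw [abs_le]
    constructor <;> linarith
  have e : ∀ A, DD (Dif d q n r) Q A = DD (gW d q (box 0 n)) Q A - DD (gW d q (blk n r z)) Q A := by
    intro A
    rw [DD_Dif, sum_DD_of_mem q n r hQm (cellLe_refl Q)]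
  have b1 : ∀ A, DD (gW d q (box (fun i => (Q i).1) m)) Q A ≤ DD (gW d q (blk n r z)) Q A :=
    DD_gW_mono q (box_finite _ _) s1 s0
  have b2 : ∀ A, DD (gW d q (blk n r z)) Q A ≤ DD (gW d q (box 0 n)) Q A :=
    DD_gW_mono q (box_finite _ _) s2 (s0.trans s1)
  have b3 : ∀ A, DD (gW d q (box 0 n)) Q A ≤
      DD (gW d q (box (fun i => (Q i).1) ((2 * n : ℕ) : ℤ))) Q A :=
    DD_gW_mono q (box_finite _ _) s3 ((s0.trans s1).trans s2)
  have I1 := integrable_DD_box (t := t) (P := P) q (fun i => (Q i).1) ((2 * n : ℕ) : ℤ) Q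
  have I2 := integrable_DD_box (t := t) (P := P) q (fun i => (Q i).1) m Q
  have hC := CC_pos d
  calc ∫ ω, (DD (Dif d q n r) Q (openCubes t ω)) ^ 2 ∂P
      ≤ ∫ ω, (2 * CC d) * (DD (gW d q (box (fun i => (Q i).1) ((2 * n : ℕ) : ℤ))) Q (openCubes t ω) -
          DD (gW d q (box (fun i => (Q i).1) m)) Q (openCubes t ω)) ∂P := by
        refine integral_mono (dep_integrable ((dep_DD Q (dep_Dif q n r)).comp fun x => x ^ 2))
          ((I1.sub I2).const_mul _) fun ω => ?_
        have c0 := abs_le.1 (DD_Dif_bound q n r Q (openCubes t ω))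
        have c1 := e (openCubes t ω)
        have c2 := b1 (openCubes t ω)
        have c3 := b2 (openCubes t ω)
        have c4 := b3 (openCubes t ω)
        simp only
        set x := DD (Dif d q n r) Q (openCubes t ω)
        have x0 : 0 ≤ x := by linarith
        calc x ^ 2 = x * x := by ring
          _ ≤ (2 * CC d) * x := mul_le_mul_of_nonneg_right c0.2 x0
          _ ≤ _ := mul_le_mul_of_nonneg_left (by linarith) (by positivity)
    _ = (2 * CC d) * (am t P q (2 * n) (fun i => (Q i).2) - am t P q m (fun i => (Q i).2)) := by
        rw [integral_const_mul, integral_sub I1 I2, am_shift hstat, am_shift hstat]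
    _ ≤ _ := mul_le_mul_of_nonneg_left (hε _ hn _) (by positivity)

open Classical in
lemma card_good (n r m : ℕ) (hmr : m ≤ r) :
    (nbl n r * (2 * (r - m) + 1) * 2) ^ d ≤ ((Kn d n).filter (Good n r m)).card := by
  have hc : (Finset.univ : Finset (Fin d → Fin (nbl n r) × Fin (2 * (r - m) + 1) × Bool)).card =
      (nbl n r * (2 * (r - m) + 1) * 2) ^ d := by
    simp [mul_assoc]
  rw [← hc]
  let φ : (Fin d → Fin (nbl n r) × Fin (2 * (r - m) + 1) × Bool) → ElemCube d :=
    fun u i => (-(n : ℤ) + (2 * r + 2) * (((u i).1 : ℕ) : ℤ) + (m + 1) + (((u i).2.1 : ℕ) : ℤ),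
      (u i).2.2)
  refine Finset.card_le_card_of_injOn φ (fun u _ => ?_) fun u _ v _ huv => ?_
  · have hu : ∀ i, (((u i).2.1 : ℕ) : ℤ) ≤ 2 * ((r : ℤ) - m) := by
      intro i
      have := (u i).2.1.2
      omega
    rw [Finset.mem_coe, Finset.mem_filter]
    constructor
    · refine mem_Kn.2 fun i => ?_
      have h1 := z_bound n r (u i).1
      have h2 := z_nonneg n r (u i).1
      have h3 := hu i
      simp only [φ]
      constructor <;> linarith [Int.natCast_nonneg ((u i).2.1 : ℕ), Int.natCast_nonneg m]
    · refine ⟨fun i => (u i).1, fun i => ?_⟩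
      have h3 := hu i
      simp only [φ, cz]
      rw [abs_le]
      constructor <;> linarith [Int.natCast_nonneg ((u i).2.1 : ℕ)]
  · funext i
    have h := congrFun huv i
    simp only [φ, Prod.mk.injEq] at h
    obtain ⟨h1, h2⟩ := h
    have hu := (u i).2.1.2
    have hv := (v i).2.1.2
    have hu' : (((u i).2.1 : ℕ) : ℤ) ≤ 2 * ((r : ℤ) - m) := by omega
    have hv' : (((v i).2.1 : ℕ) : ℤ) ≤ 2 * ((r : ℤ) - m) := by omega
    have hm0 : (0 : ℤ) ≤ m := Int.natCast_nonneg m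
    have e1 : (((u i).1 : ℕ) : ℤ) = (((v i).1 : ℕ) : ℤ) := by
      by_contra hne
      rcases lt_or_gt_of_ne hne with hl | hl
      · have : (2 * (r : ℤ) + 2) * ((((u i).1 : ℕ) : ℤ) + 1) ≤ (2 * r + 2) * (((v i).1 : ℕ) : ℤ) :=
          mul_le_mul_of_nonneg_left hl (by positivity)
        linarith [Int.natCast_nonneg ((v i).2.1 : ℕ)]
      · have : (2 * (r : ℤ) + 2) * ((((v i).1 : ℕ) : ℤ) + 1) ≤ (2 * r + 2) * (((u i).1 : ℕ) : ℤ) :=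
          mul_le_mul_of_nonneg_left hl (by positivity)
        linarith [Int.natCast_nonneg ((u i).2.1 : ℕ)]
    have e2 : (((u i).2.1 : ℕ) : ℤ) = (((v i).2.1 : ℕ) : ℤ) := by
      rw [e1] at h1
      linarith
    refine Prod.ext ?_ (Prod.ext ?_ h2)
    · ext; exact_mod_cast e1
    · ext; exact_mod_cast e2

lemma var_Dif_le (hstat : Stationary P) (hprod : ProbabilityTheory.iIndepFun
      (fun (Q : ElemCube d) (ω : Config d) => ω Q) P) (q : ℕ) {n r m : ℕ} (hm : 1 ≤ m)
    (hmr : m ≤ r) {ε : ℝ} (hε0 : 0 ≤ ε)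
    (hε : ∀ N, m ≤ N → ∀ s : Fin d → Bool, am t P q N s - am t P q m s ≤ ε)
    (hn : m ≤ 2 * n) :
    ∫ ω, (Dif d q n r (openCubes t ω)) ^ 2 ∂P - (∫ ω, Dif d q n r (openCubes t ω) ∂P) ^ 2 ≤
      ((2 * (n : ℝ) + 2) * 2) ^ d * (2 * CC d * ε) +
      (((2 * (n : ℝ) + 2) * 2) ^ d - ((nbl n r : ℝ) * (2 * ((r : ℝ) - m) + 1) * 2) ^ d) *
        (2 * CC d) ^ 2 := by
  classical
  refine (efron_stein hprod (Kn d n) _ (dep_Dif q n r)).trans ?_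
  have hC := CC_pos d
  rw [← Finset.sum_filter_add_sum_filter_not (Kn d n) (Good n r m)]
  have b1 : ∑ Q ∈ (Kn d n).filter (Good n r m),
      ∫ ω, (DD (Dif d q n r) Q (openCubes t ω)) ^ 2 ∂P ≤
      ((Kn d n).filter (Good n r m)).card • (2 * CC d * ε) :=
    Finset.sum_le_card_nsmul _ _ _ fun Q hQ =>
      good_bound hstat q hm hε hn (Finset.mem_filter.1 hQ).2
  have b2 : ∑ Q ∈ (Kn d n).filter (fun Q => ¬ Good n r m Q),
      ∫ ω, (DD (Dif d q n r) Q (openCubes t ω)) ^ 2 ∂P ≤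
      ((Kn d n).filter (fun Q => ¬ Good n r m Q)).card • ((2 * CC d) ^ 2) := by
    refine Finset.sum_le_card_nsmul _ _ _ fun Q _ => ?_
    have : ∫ ω, (DD (Dif d q n r) Q (openCubes t ω)) ^ 2 ∂P ≤ ∫ ω : Config d, (2 * CC d) ^ 2 ∂P := by
      refine integral_mono (dep_integrable ((dep_DD Q (dep_Dif q n r)).comp fun x => x ^ 2))
        (integrable_const _) fun ω => ?_
      exact sq_le_sq' (abs_le.1 (DD_Dif_bound q n r Q _)).1 (abs_le.1 (DD_Dif_bound q n r Q _)).2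
    simpa using this
  have hcard := Finset.card_filter_add_card_filter_not (s := Kn d n) (Good n r m)
  have hg := card_good (d := d) n r m hmr
  have hK := card_Kn d n
  have hK' : ((Kn d n).card : ℝ) = ((2 * (n : ℝ) + 2) * 2) ^ d := by rw [hK]; push_cast; rfl
  have hg' : ((nbl n r : ℝ) * (2 * ((r : ℝ) - m) + 1) * 2) ^ d ≤
      (((Kn d n).filter (Good n r m)).card : ℝ) := by
    have : (((nbl n r * (2 * (r - m) + 1) * 2) ^ d : ℕ) : ℝ) ≤
      (((Kn d n).filter (Good n r m)).card : ℝ) := by exact_mod_cast hg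
    push_cast [Nat.cast_sub hmr] at this
    exact this
  have hcard' : (((Kn d n).filter (Good n r m)).card : ℝ) +
      (((Kn d n).filter (fun Q => ¬ Good n r m Q)).card : ℝ) = ((2 * (n : ℝ) + 2) * 2) ^ d := by
    rw [← hK']; exact_mod_cast hcard
  rw [nsmul_eq_mul] at b1 b2
  refine (add_le_add b1 b2).trans (add_le_add ?_ ?_)
  · refine mul_le_mul_of_nonneg_right ?_ (by positivity)
    linarith [(Nat.cast_nonneg _ : (0:ℝ) ≤ (((Kn d n).filter (fun Q => ¬ Good n r m Q)).card : ℝ))]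
  · refine mul_le_mul_of_nonneg_right ?_ (by positivity)
    linarith

lemma nbl_tendsto (r : ℕ) :
    Tendsto (fun n : ℕ => (nbl n r : ℝ) / (2 * n)) atTop (𝓝 (2 * (r : ℝ) + 2)⁻¹) := by
  have h1 := tendsto_nat_floor_mul_div_atTop (R := ℝ) (a := (2 * (r : ℝ) + 2)⁻¹) (by positivity)
  have h2 : Tendsto (fun n : ℕ => (2 * (n : ℝ))) atTop atTop :=
    tendsto_natCast_atTop_atTop.const_mul_atTop (by norm_num)
  have h3 := h1.comp h2
  refine h3.congr fun n => ?_
  simp only [Function.comp]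
  congr 2
  unfold nbl
  have : (2 * (r : ℝ) + 2)⁻¹ * (2 * n) = ((2 * n : ℕ) : ℝ) / ((2 * r + 2 : ℕ) : ℝ) := by
    push_cast
    field_simp
  rw [this, Nat.floor_div_eq_div]

theorem var_Dif_small (hstat : Stationary P) (hprod : ProbabilityTheory.iIndepFun
      (fun (Q : ElemCube d) (ω : Config d) => ω Q) P) (q : ℕ) {δ : ℝ} (hδ : 0 < δ) :
    ∃ r : ℕ, ∀ᶠ n : ℕ in atTop, ((2 * (n : ℝ)) ^ d)⁻¹ *
      (∫ ω, (Dif d q n r (openCubes t ω)) ^ 2 ∂P - (∫ ω, Dif d q n r (openCubes t ω) ∂P) ^ 2) ≤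
      δ := by
  have hC := CC_pos d
  set ε : ℝ := δ / 2 / (2 ^ d * (2 * CC d)) with hεd
  have hε : 0 < ε := by positivity
  have hε2 : 2 ^ d * (2 * CC d * ε) = δ / 2 := by rw [hεd]; field_simp
  obtain ⟨m, hm, hcau⟩ := am_cauchy t P q hε
  -- choice of the block size
  have hr : Tendsto (fun r : ℕ => ((2 : ℝ) ^ d - ((2 * (r : ℝ) + 2)⁻¹ *
      (2 * ((r : ℝ) - m) + 1) * 2) ^ d) * (2 * CC d) ^ 2) atTop
      (𝓝 ((2 ^ d - (1 * 2) ^ d) * (2 * CC d) ^ 2)) := by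
    refine Tendsto.mul_const _ (Tendsto.const_sub _ (Tendsto.pow (Tendsto.mul_const _ ?_) d))
    have h0 : Tendsto (fun r : ℕ => 1 - (2 * (m : ℝ) + 1) * (2 * (r : ℝ) + 2)⁻¹) atTop
        (𝓝 (1 - (2 * (m : ℝ) + 1) * 0)) := by
      refine Tendsto.const_sub _ (Tendsto.const_mul _ (tendsto_inv_atTop_zero.comp ?_))
      exact tendsto_atTop_add_const_right _ _
        (tendsto_natCast_atTop_atTop.const_mul_atTop (by norm_num))
    rw [mul_zero, sub_zero] at h0
    refine h0.congr fun r => ?_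
    have : (2 * (r : ℝ) + 2) ≠ 0 := by positivity
    field_simp
    ring
  have hr0 : ((2 : ℝ) ^ d - (1 * 2) ^ d) * (2 * CC d) ^ 2 < δ / 2 := by
    simp; exact hδ
  obtain ⟨r, hr1, hmr⟩ := ((hr.eventually (gt_mem_nhds hr0)).and (eventually_ge_atTop m)).exists
  refine ⟨r, ?_⟩
  have hlim : Tendsto (fun n : ℕ => ((2 * (n : ℝ) + 2) / (2 * n) * 2) ^ d * (2 * CC d * ε) +
      (((2 * (n : ℝ) + 2) / (2 * n) * 2) ^ d - ((nbl n r : ℝ) / (2 * n) *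
        (2 * ((r : ℝ) - m) + 1) * 2) ^ d) * (2 * CC d) ^ 2) atTop
      (𝓝 ((1 * 2) ^ d * (2 * CC d * ε) + ((1 * 2) ^ d - ((2 * (r : ℝ) + 2)⁻¹ *
        (2 * ((r : ℝ) - m) + 1) * 2) ^ d) * (2 * CC d) ^ 2)) := by
    have h1 : Tendsto (fun n : ℕ => (2 * (n : ℝ) + 2) / (2 * n)) atTop (𝓝 1) := by
      have h0 : Tendsto (fun n : ℕ => 1 + (n : ℝ)⁻¹) atTop (𝓝 (1 + 0)) :=
        (tendsto_inv_atTop_zero.comp tendsto_natCast_atTop_atTop).const_add _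
      rw [add_zero] at h0
      refine h0.congr' ?_
      filter_upwards [eventually_gt_atTop 0] with n hn
      have : (n : ℝ) ≠ 0 := by positivity
      field_simp
    refine Tendsto.add ?_ ?_
    · exact ((h1.mul_const _).pow d).mul_const _
    · exact (((h1.mul_const _).pow d).sub
        ((((nbl_tendsto r).mul_const _).mul_const _).pow d)).mul_const _
  have hlt : (1 * 2) ^ d * (2 * CC d * ε) + ((1 * 2) ^ d - ((2 * (r : ℝ) + 2)⁻¹ *
        (2 * ((r : ℝ) - m) + 1) * 2) ^ d) * (2 * CC d) ^ 2 < δ := by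
    rw [one_mul]
    linarith
  filter_upwards [hlim.eventually (gt_mem_nhds hlt), eventually_ge_atTop m,
    eventually_gt_atTop 0] with n h1 h2 h3
  have hn : 0 < 2 * (n : ℝ) := by positivity
  have h4 := var_Dif_le hstat hprod q hm hmr hε.le hcau (n := n) (by omega)
  refine (mul_le_mul_of_nonneg_left h4 (by positivity)).trans (le_of_eq_of_le ?_ h1.le)
  simp only [mul_pow, div_pow]
  field_simp

end blocks

/-! ### Central limit theorem for the blocks -/

section blockclt

lemma norm_pow_sub_le (a b : ℂ) (ha : ‖a‖ ≤ 1) (hb : ‖b‖ ≤ 1) (M : ℕ) :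
    ‖a ^ M - b ^ M‖ ≤ M * ‖a - b‖ := by
  induction M with
  | zero => simp
  | succ M ih =>
    have e : a ^ (M + 1) - b ^ (M + 1) = a ^ M * (a - b) + (a ^ M - b ^ M) * b := by ring
    rw [e]
    refine (norm_add_le _ _).trans ?_
    rw [norm_mul, norm_mul, norm_pow]
    have h1 : ‖a‖ ^ M ≤ 1 := pow_le_one₀ (norm_nonneg _) ha
    have h2 : ‖a‖ ^ M * ‖a - b‖ ≤ 1 * ‖a - b‖ := mul_le_mul_of_nonneg_right h1 (norm_nonneg _)
    have h3 : ‖a ^ M - b ^ M‖ * ‖b‖ ≤ ‖a ^ M - b ^ M‖ * 1 :=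
      mul_le_mul_of_nonneg_left hb (norm_nonneg _)
    push_cast
    linarith

lemma cexp_taylor (y : ℝ) (hy : |y| ≤ 1) :
    ‖Complex.exp (y * Complex.I) - (1 + y * Complex.I - (y : ℂ) ^ 2 / 2)‖ ≤ |y| ^ 3 := by
  have hn : ‖(y : ℂ) * Complex.I‖ = |y| := by simp
  have h := Complex.exp_bound (x := y * Complex.I) (by rw [hn]; exact hy) (n := 3) (by norm_num)
  rw [hn] at h
  simp only [Finset.sum_range_succ, Finset.sum_range_zero, Nat.factorial] at h
  have e : (0 + ((y : ℂ) * Complex.I) ^ 0 / ((1 : ℕ) : ℂ) + ((y : ℂ) * Complex.I) ^ 1 /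
      (((0 + 1) * 1 : ℕ) : ℂ) + ((y : ℂ) * Complex.I) ^ 2 / (((1 + 1) * ((0 + 1) * 1) : ℕ) : ℂ)) =
      1 + y * Complex.I - (y : ℂ) ^ 2 / 2 := by
    have hI : ((y : ℂ) * Complex.I) ^ 2 = -(y : ℂ) ^ 2 := by
      rw [mul_pow, Complex.I_sq]; ring
    rw [hI]
    push_cast
    ring
  rw [e] at h
  refine h.trans ?_
  have : (0 : ℝ) ≤ |y| ^ 3 := by positivity
  norm_num
  nlinarith

lemma norm_cexp_I (y : ℝ) : ‖Complex.exp (y * Complex.I)‖ = 1 := Complex.norm_exp_ofReal_mul_I y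

lemma cf_taylor {Ω : Type*} [MeasurableSpace Ω] {P : Measure Ω} [IsProbabilityMeasure P]
    {X : Ω → ℝ} (hX : Measurable X) {C : ℝ} (hC : 1 ≤ C) (hb : ∀ ω, |X ω| ≤ C)
    (h0 : ∫ ω, X ω ∂P = 0) {s : ℝ} (hs : |s| * C ≤ 1) :
    ‖∫ ω, Complex.exp (((s * X ω : ℝ) : ℂ) * Complex.I) ∂P -
      Complex.exp (((-(∫ ω, X ω ^ 2 ∂P) * s ^ 2 / 2 : ℝ) : ℂ))‖ ≤ 2 * (|s| ^ 3 * C ^ 3) := by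
  have hC0 : 0 ≤ C := by linarith
  set v := ∫ ω, X ω ^ 2 ∂P with hv
  have IX : Integrable X P := Integrable.of_bound hX.aestronglyMeasurable C
    (Eventually.of_forall hb)
  have IX2 : Integrable (fun ω => X ω ^ 2) P :=
    Integrable.of_bound (hX.pow_const 2).aestronglyMeasurable (C ^ 2)
    (Eventually.of_forall fun ω => by
      rw [Real.norm_eq_abs, abs_pow]; exact pow_le_pow_left₀ (abs_nonneg _) (hb ω) 2)
  have hv0 : 0 ≤ v := integral_nonneg fun ω => sq_nonneg _
  have hvC : v ≤ C ^ 2 := by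
    have : v ≤ ∫ ω : Ω, C ^ 2 ∂P := integral_mono IX2 (integrable_const _) fun ω => by
      have := pow_le_pow_left₀ (abs_nonneg _) (hb ω) 2
      rwa [sq_abs] at this
    simpa using this
  have IE : Integrable (fun ω => Complex.exp (((s * X ω : ℝ) : ℂ) * Complex.I)) P := by
    refine Integrable.of_bound (Measurable.aestronglyMeasurable (by fun_prop)) 1
      (Eventually.of_forall fun ω => (norm_cexp_I _).le)
  have hsC : |s| ^ 3 * C ^ 3 = (|s| * C) ^ 3 := by ring
  have hsC0 : 0 ≤ |s| * C := by positivity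
  -- first part
  have A1 : ‖∫ ω, Complex.exp (((s * X ω : ℝ) : ℂ) * Complex.I) ∂P -
      (1 - ((v * s ^ 2 / 2 : ℝ) : ℂ))‖ ≤ |s| ^ 3 * C ^ 3 := by
    have I1 : Integrable (fun ω => (((s * X ω : ℝ) : ℂ) * Complex.I)) P :=
      ((IX.const_mul s).ofReal).mul_const _
    have I2 : Integrable (fun ω => (((s * X ω : ℝ) : ℂ) ^ 2 / 2)) P := by
      have : Integrable (fun ω => (((s ^ 2 / 2) * X ω ^ 2 : ℝ) : ℂ)) P := (IX2.const_mul _).ofReal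
      refine this.congr (Eventually.of_forall fun ω => ?_)
      push_cast
      ring
    have I3 : Integrable (fun ω => (1 + ((s * X ω : ℝ) : ℂ) * Complex.I)) P :=
      (integrable_const _).add I1
    have I4 : Integrable (fun ω => (1 + ((s * X ω : ℝ) : ℂ) * Complex.I -
        ((s * X ω : ℝ) : ℂ) ^ 2 / 2)) P := I3.sub I2
    have e1 : (1 - ((v * s ^ 2 / 2 : ℝ) : ℂ)) = ∫ ω, (1 + ((s * X ω : ℝ) : ℂ) * Complex.I -
        ((s * X ω : ℝ) : ℂ) ^ 2 / 2) ∂P := by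
      rw [integral_sub I3 I2, integral_add (integrable_const _) I1]
      have j1 : ∫ ω, ((s * X ω : ℝ) : ℂ) * Complex.I ∂P = 0 := by
        rw [integral_mul_const, integral_complex_ofReal, integral_const_mul, h0]
        simp
      have j2 : ∫ ω, ((s * X ω : ℝ) : ℂ) ^ 2 / 2 ∂P = ((v * s ^ 2 / 2 : ℝ) : ℂ) := by
        have : (fun ω => ((s * X ω : ℝ) : ℂ) ^ 2 / 2) =
            fun ω => (((s ^ 2 / 2) * X ω ^ 2 : ℝ) : ℂ) := by
          funext ω
          push_cast
          ring
        rw [this, integral_complex_ofReal, integral_const_mul, ← hv]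
        congr 1
        ring
      rw [j1, j2]
      simp
    rw [e1, ← integral_sub IE I4]
    refine (norm_integral_le_of_norm_le_const (C := |s| ^ 3 * C ^ 3)
      (Eventually.of_forall fun ω => ?_)).trans (by simp)
    have hy : |s * X ω| ≤ |s| * C := by
      rw [abs_mul]; exact mul_le_mul_of_nonneg_left (hb ω) (abs_nonneg _)
    refine (cexp_taylor (s * X ω) (hy.trans hs)).trans ?_
    rw [hsC]
    exact pow_le_pow_left₀ (abs_nonneg _) hy 3
  have hvs : v * s ^ 2 / 2 ≤ (|s| * C) ^ 2 := by
    rw [mul_pow, sq_abs]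
    nlinarith [sq_nonneg s]
  have hvs0 : 0 ≤ v * s ^ 2 / 2 := by positivity
  have hone : (|s| * C) ^ 2 ≤ 1 := pow_le_one₀ hsC0 hs
  have A2 : ‖Complex.exp (((-v * s ^ 2 / 2 : ℝ) : ℂ)) - (1 - ((v * s ^ 2 / 2 : ℝ) : ℂ))‖ ≤
      |s| ^ 3 * C ^ 3 := by
    have hn : ‖(((-v * s ^ 2 / 2 : ℝ) : ℂ))‖ = v * s ^ 2 / 2 := by
      rw [Complex.norm_real, Real.norm_eq_abs, show -v * s ^ 2 / 2 = -(v * s ^ 2 / 2) by ring,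
        abs_neg, abs_of_nonneg hvs0]
    have h := Complex.norm_exp_sub_one_sub_id_le (x := (((-v * s ^ 2 / 2 : ℝ) : ℂ)))
      (by rw [hn]; linarith)
    rw [hn] at h
    have e : Complex.exp (((-v * s ^ 2 / 2 : ℝ) : ℂ)) - (1 - ((v * s ^ 2 / 2 : ℝ) : ℂ)) =
      Complex.exp (((-v * s ^ 2 / 2 : ℝ) : ℂ)) - 1 - (((-v * s ^ 2 / 2 : ℝ) : ℂ)) := by
      push_cast
      ring
    rw [e]
    refine h.trans ?_
    rw [hsC]
    calc (v * s ^ 2 / 2) ^ 2 ≤ ((|s| * C) ^ 2) ^ 2 := pow_le_pow_left₀ hvs0 hvs 2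
      _ = (|s| * C) ^ 3 * (|s| * C) := by ring
      _ ≤ (|s| * C) ^ 3 * 1 := mul_le_mul_of_nonneg_left hs (by positivity)
      _ = _ := mul_one _
  calc _ = ‖(∫ ω, Complex.exp (((s * X ω : ℝ) : ℂ) * Complex.I) ∂P -
      (1 - ((v * s ^ 2 / 2 : ℝ) : ℂ))) - (Complex.exp (((-v * s ^ 2 / 2 : ℝ) : ℂ)) -
        (1 - ((v * s ^ 2 / 2 : ℝ) : ℂ)))‖ := by congr 1; ring
    _ ≤ _ := norm_sub_le _ _
    _ ≤ _ := by linarith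

variable {d : ℕ} {t : ℝ} {P : Measure (Config d)} [IsProbabilityMeasure P]

lemma dep_sum {ι : Type*} [DecidableEq ι] {f : ι → Set (ElemCube d) → ℝ}
    {K : ι → Finset (ElemCube d)} (hf : ∀ z, Dep (f z) (K z : Set (ElemCube d))) (s : Finset ι) :
    Dep (fun A => ∑ z ∈ s, f z A) (s.biUnion K : Set (ElemCube d)) := by
  intro A B h
  refine Finset.sum_congr rfl fun z hz => hf z A B fun Q hQ => h Q ?_
  exact Finset.mem_coe.2 (Finset.mem_biUnion.2 ⟨z, hz, hQ⟩)

lemma cf_sum (hprod : ProbabilityTheory.iIndepFun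
      (fun (Q : ElemCube d) (ω : Config d) => ω Q) P)
    {ι : Type*} [DecidableEq ι] {f : ι → Set (ElemCube d) → ℝ}
    {K : ι → Finset (ElemCube d)} (hf : ∀ z, Dep (f z) (K z : Set (ElemCube d)))
    (hK : ∀ z z', z ≠ z' → Disjoint (K z) (K z')) (θ : ℝ) (s : Finset ι) :
    ∫ ω, Complex.exp (((θ * ∑ z ∈ s, f z (openCubes t ω) : ℝ) : ℂ) * Complex.I) ∂P =
      ∏ z ∈ s, ∫ ω, Complex.exp (((θ * f z (openCubes t ω) : ℝ) : ℂ) * Complex.I) ∂P := by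
  induction s using Finset.induction_on with
  | empty => simp
  | insert z s hz ih =>
    rw [Finset.prod_insert hz, ← ih]
    have D1 := (hf z).comp fun x => Complex.exp (((θ * x : ℝ) : ℂ) * Complex.I)
    have D2 := (dep_sum hf s).comp fun x => Complex.exp (((θ * x : ℝ) : ℂ) * Complex.I)
    have hdis : Disjoint (K z) (s.biUnion K) := by
      rw [Finset.disjoint_biUnion_right]
      intro z' hz'
      exact hK z z' fun h => hz (h ▸ hz')
    have X := dep_indep (t := t) hprod D1 D2 hdis
    rw [← X.integral_fun_mul_eq_mul_integral
      (dep_stronglyMeasurable D1 t).aestronglyMeasurable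
      (dep_stronglyMeasurable D2 t).aestronglyMeasurable]
    refine integral_congr_ae (Eventually.of_forall fun ω => ?_)
    simp only
    rw [Finset.sum_insert hz, ← Complex.exp_add]
    congr 1
    push_cast
    ring

lemma sq_sum (hprod : ProbabilityTheory.iIndepFun
      (fun (Q : ElemCube d) (ω : Config d) => ω Q) P)
    {ι : Type*} [DecidableEq ι] {f : ι → Set (ElemCube d) → ℝ}
    {K : ι → Finset (ElemCube d)} (hf : ∀ z, Dep (f z) (K z : Set (ElemCube d)))
    (hK : ∀ z z', z ≠ z' → Disjoint (K z) (K z')) 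
    (h0 : ∀ z, ∫ ω, f z (openCubes t ω) ∂P = 0) (s : Finset ι) :
    ∫ ω, (∑ z ∈ s, f z (openCubes t ω)) ^ 2 ∂P =
      ∑ z ∈ s, ∫ ω, (f z (openCubes t ω)) ^ 2 ∂P := by
  induction s using Finset.induction_on with
  | empty => simp
  | insert z s hz ih =>
    rw [Finset.sum_insert hz, ← ih]
    have D1 := hf z
    have D2 := dep_sum hf s
    have hdis : Disjoint (K z) (s.biUnion K) := by
      rw [Finset.disjoint_biUnion_right]
      intro z' hz'
      exact hK z z' fun h => hz (h ▸ hz')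
    have X := dep_indep (t := t) hprod D1 D2 hdis
    have I1 := dep_integrable (t := t) (P := P) D1
    have I2 := dep_integrable (t := t) (P := P) D2
    have M := X.integral_fun_mul_eq_mul_integral I1.aestronglyMeasurable I2.aestronglyMeasurable
    rw [h0 z, zero_mul] at M
    have IM : Integrable (fun ω => f z (openCubes t ω) * ∑ z ∈ s, f z (openCubes t ω)) P :=
      X.integrable_mul I1 I2
    have S1 : Integrable (fun ω => (f z (openCubes t ω)) ^ 2) P :=
      dep_integrable (D1.comp fun x => x ^ 2)
    have S2 : Integrable (fun ω => (∑ z ∈ s, f z (openCubes t ω)) ^ 2) P :=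
      dep_integrable (D2.comp fun x => x ^ 2)
    have e : ∀ ω, (∑ z ∈ insert z s, f z (openCubes t ω)) ^ 2 = (f z (openCubes t ω)) ^ 2 +
        ((∑ z ∈ s, f z (openCubes t ω)) ^ 2 +
          2 * (f z (openCubes t ω) * ∑ z ∈ s, f z (openCubes t ω))) := by
      intro ω
      rw [Finset.sum_insert hz]
      ring
    simp_rw [e]
    have S3 := IM.const_mul 2
    have S4 : Integrable (fun ω => (∑ z ∈ s, f z (openCubes t ω)) ^ 2 +
          2 * (f z (openCubes t ω) * ∑ z ∈ s, f z (openCubes t ω))) P := S2.add S3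
    rw [integral_add S1 S4, integral_add S2 S3, integral_const_mul, M]
    ring

/-- The sum over the blocks. -/
def Sb (d q n r : ℕ) (A : Set (ElemCube d)) : ℝ :=
  ∑ z : Fin d → Fin (nbl n r), gW d q (blk n r z) A

lemma nb_finite (c : Fin d → ℤ) (r : ℤ) : (nb (box c r)).Finite := by
  refine finite_of_bounded _ (fun i => c i - r - 1) (fun i => c i + r) ?_
  rintro Q ⟨R, hR, h⟩ i
  have h1 := hR i
  have h2 := faces_sub Q R h i
  have h3 := ite_nonneg' (R i).2
  constructor <;> linarith

/-- The cubes influencing a block. -/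
def Kb (n r : ℕ) (z : Fin d → Fin (nbl n r)) : Finset (ElemCube d) :=
  (nb_finite (cz n r z) r).toFinset

lemma dep_blk (q n r : ℕ) (z : Fin d → Fin (nbl n r)) :
    Dep (gW d q (blk n r z)) (Kb n r z : Set (ElemCube d)) := by
  unfold Kb
  rw [Set.Finite.coe_toFinset]
  exact dep_gW q _

lemma Kb_disjoint (n r : ℕ) (z z' : Fin d → Fin (nbl n r)) (h : z ≠ z') :
    Disjoint (Kb n r z) (Kb n r z') := by
  rw [Finset.disjoint_left]
  intro Q h1 h2
  simp only [Kb, Set.Finite.mem_toFinset] at h1 h2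
  obtain ⟨R, hR, hQ⟩ := h1
  obtain ⟨R', hR', hQ'⟩ := h2
  exact h (blk_unique n r hR hR' hQ hQ')

lemma law_blk (hstat : Stationary P) {β : Type*} [NormedAddCommGroup β] [NormedSpace ℝ β]
    (F : ℝ → β) (q n r : ℕ) (z : Fin d → Fin (nbl n r)) :
    ∫ ω, F (gW d q (blk n r z) (openCubes t ω)) ∂P =
      ∫ ω, F (gW d q (box 0 r) (openCubes t ω)) ∂P := by
  rw [← integral_shift hstat ((dep_blk q n r z).comp F) (cz n r z)]
  congr 1
  funext ω
  have e : blk n r z = translateCube (cz n r z) '' (box 0 (r : ℤ)) := by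
    rw [box_translate, zero_add]
    rfl
  rw [e, gW_translate]

lemma vol_ratio (d r : ℕ) : Tendsto (fun n : ℕ => ((nbl n r : ℝ) ^ d) / (2 * (n : ℝ)) ^ d) atTop
    (𝓝 ((2 * (r : ℝ) + 2)⁻¹ ^ d)) := by
  refine ((nbl_tendsto r).pow d).congr fun n => ?_
  rw [div_pow]

theorem block_clt (hd : 0 < d) (hstat : Stationary P) (hprod : ProbabilityTheory.iIndepFun
      (fun (Q : ElemCube d) (ω : Config d) => ω Q) P) (q r : ℕ) :
    ∃ w : ℝ, 0 ≤ w ∧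
      Tendsto (fun n : ℕ => ∫ ω, ((Real.sqrt ((2 * (n : ℝ)) ^ d))⁻¹ * (Sb d q n r (openCubes t ω) -
        ∫ ω', Sb d q n r (openCubes t ω') ∂P)) ^ 2 ∂P) atTop (𝓝 w) ∧
      ∀ θ : ℝ, Tendsto (fun n : ℕ => ∫ ω, Complex.exp (((θ * ((Real.sqrt ((2 * (n : ℝ)) ^ d))⁻¹ *
        (Sb d q n r (openCubes t ω) - ∫ ω', Sb d q n r (openCubes t ω') ∂P)) : ℝ) : ℂ) *
          Complex.I) ∂P) atTop (𝓝 (Complex.exp ((-w * θ ^ 2 / 2 : ℝ) : ℂ))) := by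
  classical
  set μ := ∫ ω, gW d q (box 0 r) (openCubes t ω) ∂P with hμ
  obtain ⟨K0, hK0⟩ := box_dep q (0 : Fin d → ℤ) r
  let X : Config d → ℝ := fun ω => gW d q (box 0 r) (openCubes t ω) - μ
  have hXm : Measurable X := dep_measurable (hK0.comp fun x => x - μ) t
  obtain ⟨C', hC'⟩ := dep_bounded (hK0.comp fun x => x - μ) t
  set C := max C' 1 with hCd
  have hC1 : 1 ≤ C := le_max_right _ _
  have hXC : ∀ ω, |X ω| ≤ C := fun ω => (hC' ω).trans (le_max_left _ _)
  have hX0 : ∫ ω, X ω ∂P = 0 := by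
    simp only [X]
    rw [integral_sub (dep_integrable hK0) (integrable_const _)]
    simp [hμ]
  set v := ∫ ω, X ω ^ 2 ∂P with hv
  have hv0 : 0 ≤ v := integral_nonneg fun ω => sq_nonneg _
  let f : (n : ℕ) → (Fin d → Fin (nbl n r)) → Set (ElemCube d) → ℝ :=
    fun n z A => gW d q (blk n r z) A - μ
  have hf : ∀ n z, Dep (f n z) (Kb n r z : Set (ElemCube d)) := fun n z =>
    (dep_blk q n r z).comp fun x => x - μ
  have hlaw : ∀ {β : Type} [NormedAddCommGroup β] [NormedSpace ℝ β] (F : ℝ → β) n z,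
      ∫ ω, F (f n z (openCubes t ω)) ∂P = ∫ ω, F (X ω) ∂P := fun F n z =>
    law_blk hstat (fun x => F (x - μ)) q n r z
  have hcenter : ∀ n ω, Sb d q n r (openCubes t ω) - ∫ ω', Sb d q n r (openCubes t ω') ∂P =
      ∑ z, f n z (openCubes t ω) := by
    intro n ω
    have : ∫ ω', Sb d q n r (openCubes t ω') ∂P = ∑ z : Fin d → Fin (nbl n r), μ := by
      unfold Sb
      rw [integral_finsetSum _ fun z _ => dep_integrable (dep_blk q n r z)]
      exact Finset.sum_congr rfl fun z _ => law_blk hstat (fun x => x) q n r z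
    rw [this]
    simp only [f, Sb]
    rw [Finset.sum_sub_distrib]
  have hcard : ∀ n, (Finset.univ : Finset (Fin d → Fin (nbl n r))).card = nbl n r ^ d := by
    intro n; simp
  have hV : Tendsto (fun n : ℕ => (2 * (n : ℝ)) ^ d) atTop atTop :=
    (tendsto_pow_atTop hd.ne').comp (tendsto_natCast_atTop_atTop.const_mul_atTop (by norm_num))
  have hsV : Tendsto (fun n : ℕ => (Real.sqrt ((2 * (n : ℝ)) ^ d))⁻¹) atTop (𝓝 0) :=
    tendsto_inv_atTop_zero.comp (Real.tendsto_sqrt_atTop.comp hV)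
  refine ⟨v * (2 * (r : ℝ) + 2)⁻¹ ^ d, by positivity, ?_, ?_⟩
  · refine ((vol_ratio d r).const_mul v).congr fun n => ?_
    simp_rw [hcenter, mul_pow]
    rw [integral_const_mul, sq_sum hprod (hf n) (Kb_disjoint n r)
      (fun z => (hlaw (fun x => x) n z).trans hX0)]
    rw [Finset.sum_congr rfl fun z _ => hlaw (fun x => x ^ 2) n z, Finset.sum_const, hcard,
      nsmul_eq_mul, inv_pow, Real.sq_sqrt (by positivity)]
    push_cast
    rw [hv]
    simp only [div_eq_mul_inv]
    ring
  · intro θ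
    have hcf : ∀ n : ℕ, ∫ ω, Complex.exp (((θ * ((Real.sqrt ((2 * (n : ℝ)) ^ d))⁻¹ *
        (Sb d q n r (openCubes t ω) - ∫ ω', Sb d q n r (openCubes t ω') ∂P)) : ℝ) : ℂ) *
          Complex.I) ∂P = (∫ ω, Complex.exp ((((Real.sqrt ((2 * (n : ℝ)) ^ d))⁻¹ * θ * X ω : ℝ) : ℂ)
            * Complex.I) ∂P) ^ (nbl n r ^ d) := by
      intro n
      simp_rw [hcenter]
      have := cf_sum (t := t) hprod (hf n) (Kb_disjoint n r)
        ((Real.sqrt ((2 * (n : ℝ)) ^ d))⁻¹ * θ) Finset.univ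
      rw [Finset.prod_congr rfl fun z _ => hlaw (fun x => Complex.exp
        ((((Real.sqrt ((2 * (n : ℝ)) ^ d))⁻¹ * θ * x : ℝ) : ℂ) * Complex.I)) n z,
        Finset.prod_const, hcard] at this
      rw [← this]
      refine integral_congr_ae (Eventually.of_forall fun ω => ?_)
      simp only
      congr 3
      ring
    simp_rw [hcf]
    -- compare with the exponential
    have hexp : Tendsto (fun n : ℕ => (Complex.exp (((-v * ((Real.sqrt ((2 * (n : ℝ)) ^ d))⁻¹ * θ)
        ^ 2 / 2 : ℝ) : ℂ))) ^ (nbl n r ^ d)) atTop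
        (𝓝 (Complex.exp ((-(v * (2 * (r : ℝ) + 2)⁻¹ ^ d) * θ ^ 2 / 2 : ℝ) : ℂ))) := by
      have h1 : Tendsto (fun n : ℕ => -(v * (((nbl n r : ℝ) ^ d) / (2 * (n : ℝ)) ^ d)) * θ ^ 2 / 2)
          atTop (𝓝 (-(v * (2 * (r : ℝ) + 2)⁻¹ ^ d) * θ ^ 2 / 2)) :=
        ((((vol_ratio d r).const_mul v).neg).mul_const _).div_const _
      have h2 := (Complex.continuous_exp.comp Complex.continuous_ofReal).continuousAt.tendsto.comp h1
      refine h2.congr fun n => ?_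
      simp only [Function.comp]
      rw [← Complex.exp_nat_mul]
      congr 1
      rw [mul_pow (Real.sqrt ((2 * (n : ℝ)) ^ d))⁻¹ θ 2, inv_pow, Real.sq_sqrt (by positivity)]
      push_cast
      simp only [div_eq_mul_inv]
      ring
    have hdiff : Tendsto (fun n : ℕ => (∫ ω, Complex.exp ((((Real.sqrt ((2 * (n : ℝ)) ^ d))⁻¹ * θ *
        X ω : ℝ) : ℂ) * Complex.I) ∂P) ^ (nbl n r ^ d) - (Complex.exp (((-v *
          ((Real.sqrt ((2 * (n : ℝ)) ^ d))⁻¹ * θ) ^ 2 / 2 : ℝ) : ℂ))) ^ (nbl n r ^ d))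
        atTop (𝓝 0) := by
      have hb : Tendsto (fun n : ℕ => 2 * (|θ| ^ 3 * C ^ 3) * ((((nbl n r : ℝ) ^ d) /
          (2 * (n : ℝ)) ^ d) * (Real.sqrt ((2 * (n : ℝ)) ^ d))⁻¹)) atTop
          (𝓝 (2 * (|θ| ^ 3 * C ^ 3) * ((2 * (r : ℝ) + 2)⁻¹ ^ d * 0))) :=
        ((vol_ratio d r).mul hsV).const_mul _
      rw [mul_zero, mul_zero] at hb
      refine squeeze_zero_norm' ?_ hb
      have hsm : Tendsto (fun n : ℕ => |(Real.sqrt ((2 * (n : ℝ)) ^ d))⁻¹ * θ| * C) atTop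
          (𝓝 (|0 * θ| * C)) := ((hsV.mul_const θ).abs).mul_const C
      have hsm' := hsm.eventually (gt_mem_nhds (show |0 * θ| * C < 1 by simp))
      filter_upwards [hsm'] with n hn
      have T := cf_taylor (P := P) hXm hC1 hXC hX0 hn.le
      rw [← hv] at T
      refine (norm_pow_sub_le _ _ ?_ ?_ _).trans ?_
      · refine (norm_integral_le_of_norm_le_const (C := 1)
          (Eventually.of_forall fun ω => (norm_cexp_I _).le)).trans (by simp)
      · rw [Complex.norm_exp, Complex.ofReal_re, Real.exp_le_one_iff]
        have : 0 ≤ v * ((Real.sqrt ((2 * (n : ℝ)) ^ d))⁻¹ * θ) ^ 2 / 2 := by positivity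
        linarith
      · refine (mul_le_mul_of_nonneg_left T (by positivity)).trans (le_of_eq ?_)
        set S := Real.sqrt ((2 * (n : ℝ)) ^ d) with hS
        have hS0 : 0 ≤ S := Real.sqrt_nonneg _
        have hSS : (2 * (n : ℝ)) ^ d = S ^ 2 := by rw [hS, Real.sq_sqrt (by positivity)]
        rw [hSS, abs_mul, abs_of_nonneg (inv_nonneg.2 hS0)]
        push_cast
        simp only [div_eq_mul_inv, mul_pow, inv_pow]
        ring
    have := hdiff.add hexp
    rw [zero_add] at this
    refine this.congr fun n => ?_
    ring

end blockclt

/-! ### Abstract approximation lemma -/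

section approx

variable {Ω : Type*} [MeasurableSpace Ω] {P : Measure Ω} [IsProbabilityMeasure P]

lemma sqrt_eq_norm {X : Ω → ℝ} (hX : MemLp X 2 P) :
    Real.sqrt (∫ ω, X ω ^ 2 ∂P) = ‖hX.toLp X‖ := by
  rw [Lp.norm_toLp, hX.eLpNorm_eq_integral_rpow_norm (by norm_num) (by norm_num),
    ENNReal.toReal_ofReal (by positivity), Real.sqrt_eq_rpow]
  simp

lemma l2_triangle {Y Z : Ω → ℝ} (hY : MemLp Y 2 P) (hZ : MemLp Z 2 P) :
    |Real.sqrt (∫ ω, Y ω ^ 2 ∂P) - Real.sqrt (∫ ω, Z ω ^ 2 ∂P)| ≤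
      Real.sqrt (∫ ω, (Y ω - Z ω) ^ 2 ∂P) := by
  have h := sqrt_eq_norm (hY.sub hZ)
  simp only [Pi.sub_apply] at h
  rw [sqrt_eq_norm hY, sqrt_eq_norm hZ, h, MemLp.toLp_sub]
  exact abs_norm_sub_norm_le _ _

lemma cexp_lip (a b : ℝ) :
    ‖Complex.exp ((a : ℂ) * Complex.I) - Complex.exp ((b : ℂ) * Complex.I)‖ ≤ |a - b| := by
  have e : Complex.exp ((a : ℂ) * Complex.I) - Complex.exp ((b : ℂ) * Complex.I) =
      Complex.exp ((b : ℂ) * Complex.I) * (Complex.exp (Complex.I * ((a - b : ℝ) : ℂ)) - 1) := by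
    rw [mul_sub, ← Complex.exp_add, mul_one]
    congr 2
    push_cast
    ring
  rw [e, norm_mul, norm_cexp_I, one_mul]
  exact Real.norm_exp_I_mul_ofReal_sub_one_le

lemma integral_abs_le_sqrt {D : Ω → ℝ} (hD : MemLp D 2 P) :
    ∫ ω, |D ω| ∂P ≤ Real.sqrt (∫ ω, D ω ^ 2 ∂P) := by
  have I1 : Integrable (fun ω => |D ω|) P := (hD.integrable (by norm_num)).abs
  have I2 : Integrable (fun ω => D ω ^ 2) P := hD.integrable_sq
  set m := ∫ ω, |D ω| ∂P with hm
  refine Real.le_sqrt_of_sq_le ?_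
  have h : 0 ≤ ∫ ω, (|D ω| - m) ^ 2 ∂P := integral_nonneg fun ω => sq_nonneg _
  have e : ∀ ω, (|D ω| - m) ^ 2 = D ω ^ 2 - (2 * m * |D ω| - m ^ 2) := by
    intro ω
    rw [sub_sq, sq_abs]
    ring
  simp_rw [e] at h
  have I3 : Integrable (fun ω => 2 * m * |D ω| - m ^ 2) P :=
    (I1.const_mul _).sub (integrable_const _)
  rw [integral_sub I2 I3, integral_sub (I1.const_mul _) (integrable_const _), integral_const_mul,
    ← hm] at h
  simp at h
  nlinarith

lemma integrable_cexp {Y : Ω → ℝ} (hY : AEStronglyMeasurable Y P) (θ : ℝ) :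
    Integrable (fun ω => Complex.exp (((θ * Y ω : ℝ) : ℂ) * Complex.I)) P := by
  refine Integrable.of_bound ?_ 1 (Eventually.of_forall fun ω => (norm_cexp_I _).le)
  have hc : Continuous fun x : ℝ => Complex.exp (((θ * x : ℝ) : ℂ) * Complex.I) := by fun_prop
  exact hc.comp_aestronglyMeasurable hY

lemma cf_close {Y Z : Ω → ℝ} (hY : MemLp Y 2 P) (hZ : MemLp Z 2 P) (θ : ℝ) :
    ‖∫ ω, Complex.exp (((θ * Y ω : ℝ) : ℂ) * Complex.I) ∂P -
      ∫ ω, Complex.exp (((θ * Z ω : ℝ) : ℂ) * Complex.I) ∂P‖ ≤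
      |θ| * Real.sqrt (∫ ω, (Y ω - Z ω) ^ 2 ∂P) := by
  have hD : MemLp (fun ω => Y ω - Z ω) 2 P := hY.sub hZ
  rw [← integral_sub (integrable_cexp hY.1 θ) (integrable_cexp hZ.1 θ)]
  refine (norm_integral_le_integral_norm _).trans ?_
  have I1 : Integrable (fun ω => |Y ω - Z ω|) P := (hD.integrable (by norm_num)).abs
  calc _ ≤ ∫ ω, |θ| * |Y ω - Z ω| ∂P := by
        refine integral_mono ((integrable_cexp hY.1 θ).sub (integrable_cexp hZ.1 θ)).norm
          (I1.const_mul _) fun ω => ?_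
        refine (cexp_lip _ _).trans (le_of_eq ?_)
        rw [← abs_mul]
        congr 1
        ring
    _ = |θ| * ∫ ω, |Y ω - Z ω| ∂P := integral_const_mul _ _
    _ ≤ _ := mul_le_mul_of_nonneg_left (integral_abs_le_sqrt hD) (abs_nonneg _)

theorem approx_limit {Y : ℕ → Ω → ℝ} (hY : ∀ n, MemLp (Y n) 2 P)
    (H : ∀ ε : ℝ, 0 < ε → ∃ w : ℝ, 0 ≤ w ∧ ∃ Z : ℕ → Ω → ℝ, (∀ n, MemLp (Z n) 2 P) ∧
      Tendsto (fun n => ∫ ω, Z n ω ^ 2 ∂P) atTop (𝓝 w) ∧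
      (∀ θ : ℝ, Tendsto (fun n => ∫ ω, Complex.exp (((θ * Z n ω : ℝ) : ℂ) * Complex.I) ∂P) atTop
        (𝓝 (Complex.exp ((-w * θ ^ 2 / 2 : ℝ) : ℂ)))) ∧
      ∀ᶠ n in atTop, ∫ ω, (Y n ω - Z n ω) ^ 2 ∂P ≤ ε) :
    ∃ σ2 : NNReal, Tendsto (fun n => ∫ ω, Y n ω ^ 2 ∂P) atTop (𝓝 (σ2 : ℝ)) ∧
      ∀ θ : ℝ, Tendsto (fun n => ∫ ω, Complex.exp (((θ * Y n ω : ℝ) : ℂ) * Complex.I) ∂P) atTop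
        (𝓝 (Complex.exp ((-(σ2 : ℝ) * θ ^ 2 / 2 : ℝ) : ℂ))) := by
  have H' : ∀ ε : ℝ, 0 < ε → ∃ b : ℝ, 0 ≤ b ∧
      (∀ᶠ n in atTop, |Real.sqrt (∫ ω, Y n ω ^ 2 ∂P) - b| ≤ 2 * ε) ∧
      ∀ θ : ℝ, ∀ η > 0, ∀ᶠ n in atTop,
        ‖∫ ω, Complex.exp (((θ * Y n ω : ℝ) : ℂ) * Complex.I) ∂P -
          Complex.exp ((-b ^ 2 * θ ^ 2 / 2 : ℝ) : ℂ)‖ ≤ |θ| * ε + η := by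
    intro ε hε
    obtain ⟨w, hw, Z, hZ, h1, h2, h3⟩ := H (ε ^ 2) (by positivity)
    have h3' : ∀ᶠ n in atTop, Real.sqrt (∫ ω, (Y n ω - Z n ω) ^ 2 ∂P) ≤ ε := by
      filter_upwards [h3] with n hn
      exact (Real.sqrt_le_left hε.le).2 hn
    refine ⟨Real.sqrt w, Real.sqrt_nonneg _, ?_, ?_⟩
    · have h4 := (Real.continuous_sqrt.continuousAt.tendsto.comp h1)
      have h5 := h4.eventually (Metric.closedBall_mem_nhds _ hε)
      filter_upwards [h3', h5] with n a1 a2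
      have a3 := l2_triangle (hY n) (hZ n)
      have a4 : |Real.sqrt (∫ ω, Z n ω ^ 2 ∂P) - Real.sqrt w| ≤ ε := a2
      calc _ ≤ |Real.sqrt (∫ ω, Y n ω ^ 2 ∂P) - Real.sqrt (∫ ω, Z n ω ^ 2 ∂P)| +
            |Real.sqrt (∫ ω, Z n ω ^ 2 ∂P) - Real.sqrt w| := abs_sub_le _ _ _
        _ ≤ _ := by linarith
    · intro θ η hη
      have h5 := (h2 θ).eventually (Metric.closedBall_mem_nhds _ hη)
      filter_upwards [h3', h5] with n a1 a2
      rw [Real.sq_sqrt hw]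
      have a3 := cf_close (hY n) (hZ n) θ
      have a4 := mem_closedBall_iff_norm.1 a2
      have a5 := mul_le_mul_of_nonneg_left a1 (abs_nonneg θ)
      refine (norm_sub_le_norm_sub_add_norm_sub _
        (∫ ω, Complex.exp (((θ * Z n ω : ℝ) : ℂ) * Complex.I) ∂P) _).trans ?_
      linarith
  set a : ℕ → ℝ := fun n => Real.sqrt (∫ ω, Y n ω ^ 2 ∂P) with ha
  have hcau : CauchySeq a := by
    rw [Metric.cauchySeq_iff']
    intro ε hε
    obtain ⟨b, -, hb, -⟩ := H' (ε / 8) (by positivity)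
    obtain ⟨N, hN⟩ := eventually_atTop.1 hb
    refine ⟨N, fun n hn => ?_⟩
    have h1 := abs_le.1 (hN n hn)
    have h2 := abs_le.1 (hN N le_rfl)
    rw [Real.dist_eq, abs_lt]
    simp only [ha]
    constructor <;> linarith
  obtain ⟨s, hs⟩ := cauchySeq_tendsto_of_complete hcau
  have hs2 : Tendsto (fun n => ∫ ω, Y n ω ^ 2 ∂P) atTop (𝓝 (s ^ 2)) := by
    refine (hs.pow 2).congr fun n => ?_
    exact Real.sq_sqrt (integral_nonneg fun ω => sq_nonneg _)
  refine ⟨⟨s ^ 2, sq_nonneg s⟩, hs2, fun θ => ?_⟩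
  change Tendsto _ _ (𝓝 (Complex.exp ((-s ^ 2 * θ ^ 2 / 2 : ℝ) : ℂ)))
  rw [Metric.tendsto_nhds]
  intro η hη
  have hcont : ContinuousAt (fun b : ℝ => Complex.exp ((-b ^ 2 * θ ^ 2 / 2 : ℝ) : ℂ)) s := by
    fun_prop
  obtain ⟨δ, hδ, hδ'⟩ := Metric.continuousAt_iff.1 hcont (η / 4) (by positivity)
  have hθ : 0 < |θ| + 1 := by positivity
  set ε := min (δ / 3) (η / 4 / (|θ| + 1)) with hεd
  have hε : 0 < ε := by positivity
  obtain ⟨b, hb0, hb, hcf⟩ := H' ε hε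
  have hsb : |s - b| ≤ 2 * ε :=
    le_of_tendsto ((hs.sub_const b).abs) hb
  have h1 : dist b s < δ := by
    rw [dist_comm, Real.dist_eq]
    have : ε ≤ δ / 3 := min_le_left _ _
    linarith
  have h2 := hδ' h1
  have h3 : |θ| * ε ≤ η / 4 := by
    have h4 : ε ≤ η / 4 / (|θ| + 1) := min_le_right _ _
    rw [le_div_iff₀ hθ] at h4
    nlinarith
  filter_upwards [hcf θ (η / 4) (by positivity)] with n hn
  rw [← dist_eq_norm] at hn
  have := dist_triangle (∫ ω, Complex.exp (((θ * Y n ω : ℝ) : ℂ) * Complex.I) ∂P)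
    (Complex.exp ((-b ^ 2 * θ ^ 2 / 2 : ℝ) : ℂ)) (Complex.exp ((-s ^ 2 * θ ^ 2 / 2 : ℝ) : ℂ))
  linarith

end approx

/-- **CLT for Betti numbers.** Fix `0 ≤ q < d` and `t ∈ [0,1]`, and let `P` be
a stationary product probability measure on `Ω = [0,1]^{K^d}` (the coordinates
`(ω_Q)_{Q ∈ K^d}` are independent under `P`). Then there is a constant `σ² ≥ 0`
(depending on `d`, `q`, `t`) such that, as `n → ∞`,
(i) `|Λ_n|⁻¹ E[(β_q^n(t) - E[β_q^n(t)])²] → σ²`, and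
(ii) `|Λ_n|^{-1/2} (β_q^n(t) - E[β_q^n(t)])` converges in distribution to `N(0, σ²)`
(tested against bounded continuous functions). -/
theorem clt_betti (d q : ℕ) (hq : q < d) (t : ℝ) (ht : t ∈ Set.Icc (0 : ℝ) 1)
    (P : Measure (Config d)) [IsProbabilityMeasure P]
    (hstat : Stationary P)
    (hprod : ProbabilityTheory.iIndepFun
      (fun (Q : ElemCube d) (ω : Config d) => ω Q) P) :
    ∃ σ2 : NNReal,
      Tendsto
          (fun n : ℕ => ((2 * (n : ℝ)) ^ d)⁻¹ *
            ∫ ω, ((bettiN d q n t ω : ℝ) - ∫ ω', (bettiN d q n t ω' : ℝ) ∂P) ^ 2 ∂P)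
          atTop (𝓝 (σ2 : ℝ))
        ∧ ∀ g : BoundedContinuousFunction ℝ ℝ,
            Tendsto
              (fun n : ℕ => ∫ ω, g ((Real.sqrt ((2 * (n : ℝ)) ^ d))⁻¹ *
                ((bettiN d q n t ω : ℝ) - ∫ ω', (bettiN d q n t ω' : ℝ) ∂P)) ∂P)
              atTop (𝓝 (∫ z, g z ∂(ProbabilityTheory.gaussianReal 0 σ2))) := by

  have hd : 0 < d := by omega
  simp_rw [bettiN_eq]
  have hGn : ∀ n : ℕ, Dep (gW d q (box (0 : Fin d → ℤ) n)) (Kn d n : Set (ElemCube d)) := fun n =>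
    (dep_gW q (box (0 : Fin d → ℤ) n)).mono (nb_box_subset n)
  have hSn : ∀ n r : ℕ, Dep (Sb d q n r) (Kn d n : Set (ElemCube d)) := by
    intro n r A B h
    have h1 := hGn n A B h
    have h2 := dep_Dif q n r A B h
    have e : ∀ A, Sb d q n r A = gW d q (box (0 : Fin d → ℤ) n) A - Dif d q n r A := by
      intro A
      have : Dif d q n r A = gW d q (box (0 : Fin d → ℤ) n) A - Sb d q n r A := rfl
      rw [this]; ring
    rw [e, e, h1, h2]
  have hmem : ∀ (n : ℕ) (f : Set (ElemCube d) → ℝ), Dep f (Kn d n : Set (ElemCube d)) →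
      MemLp (fun ω => (Real.sqrt ((2 * (n : ℝ)) ^ d))⁻¹ *
        (f (openCubes t ω) - ∫ ω', f (openCubes t ω') ∂P)) 2 P := by
    intro n f hf
    have hf2 := hf.comp (fun x => (Real.sqrt ((2 * (n : ℝ)) ^ d))⁻¹ *
        (x - ∫ ω', f (openCubes t ω') ∂P))
    obtain ⟨C, hC⟩ := dep_bounded hf2 t
    exact MemLp.of_bound (dep_stronglyMeasurable hf2 t).aestronglyMeasurable C
      (Eventually.of_forall hC)
  have hsq : ∀ (n : ℕ) (f : Config d → ℝ),
      ∫ ω, ((Real.sqrt ((2 * (n : ℝ)) ^ d))⁻¹ * f ω) ^ 2 ∂P =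
        ((2 * (n : ℝ)) ^ d)⁻¹ * ∫ ω, f ω ^ 2 ∂P := by
    intro n f
    rw [← integral_const_mul]
    refine integral_congr_ae (Eventually.of_forall fun ω => ?_)
    have h0 : (0 : ℝ) ≤ (2 * (n : ℝ)) ^ d := by positivity
    change (_ * f ω) ^ 2 = _ * f ω ^ 2
    rw [mul_pow _ (f ω), inv_pow, Real.sq_sqrt h0]
  obtain ⟨σ2, h1, h2⟩ := approx_limit (P := P)
    (Y := fun n ω => (Real.sqrt ((2 * (n : ℝ)) ^ d))⁻¹ *
      (gW d q (box (0 : Fin d → ℤ) n) (openCubes t ω) -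
        ∫ ω', gW d q (box (0 : Fin d → ℤ) n) (openCubes t ω') ∂P))
    (fun n => hmem n _ (hGn n)) (by
      intro ε hε
      obtain ⟨r, hr⟩ := var_Dif_small (t := t) hstat hprod q hε
      obtain ⟨w, hw, hw1, hw2⟩ := block_clt (t := t) hd hstat hprod q r
      refine ⟨w, hw, _, fun n => hmem n _ (hSn n r), hw1, hw2, ?_⟩
      filter_upwards [hr] with n hn
      refine le_trans (le_of_eq ?_) hn
      have IG := dep_integrable (t := t) (P := P) (hGn n)
      have IS := dep_integrable (t := t) (P := P) (hSn n r)
      have ID := dep_integrable (t := t) (P := P) (dep_Dif q n r)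
      have ID2 := dep_integrable (t := t) (P := P) ((dep_Dif q n r).comp (fun x : ℝ => x ^ 2))
      have eD : ∫ ω, Dif d q n r (openCubes t ω) ∂P =
          ∫ ω, gW d q (box (0 : Fin d → ℤ) n) (openCubes t ω) ∂P -
            ∫ ω, Sb d q n r (openCubes t ω) ∂P := by
        rw [← integral_sub IG IS]; rfl
      set m := ∫ ω, Dif d q n r (openCubes t ω) ∂P with hm
      have e1 : ∀ ω, ((Real.sqrt ((2 * (n : ℝ)) ^ d))⁻¹ *
          (gW d q (box (0 : Fin d → ℤ) n) (openCubes t ω) -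
            ∫ ω', gW d q (box (0 : Fin d → ℤ) n) (openCubes t ω') ∂P) -
          (Real.sqrt ((2 * (n : ℝ)) ^ d))⁻¹ * (Sb d q n r (openCubes t ω) -
            ∫ ω', Sb d q n r (openCubes t ω') ∂P)) =
          (Real.sqrt ((2 * (n : ℝ)) ^ d))⁻¹ * (Dif d q n r (openCubes t ω) - m) := by
        intro ω
        have : Dif d q n r (openCubes t ω) = gW d q (box (0 : Fin d → ℤ) n) (openCubes t ω) -
          Sb d q n r (openCubes t ω) := rfl
        rw [this, eD]; ring
      simp only [e1]
      rw [hsq n (fun ω => Dif d q n r (openCubes t ω) - m)]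
      congr 1
      have e2 : ∀ ω, (Dif d q n r (openCubes t ω) - m) ^ 2 =
          (Dif d q n r (openCubes t ω)) ^ 2 - 2 * m * Dif d q n r (openCubes t ω) + m ^ 2 :=
        fun ω => by ring
      simp only [e2]
      have ID2' : Integrable (fun ω => (Dif d q n r (openCubes t ω)) ^ 2) P := ID2
      have ID3 : Integrable (fun ω => (Dif d q n r (openCubes t ω)) ^ 2 -
          2 * m * Dif d q n r (openCubes t ω)) P := ID2'.sub (ID.const_mul _)
      rw [integral_add ID3 (integrable_const _),
        integral_sub ID2' (ID.const_mul _), integral_const_mul, ← hm]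
      simp
      ring)
  refine ⟨σ2, ?_, ?_⟩
  · refine h1.congr fun n => ?_
    exact hsq n _
  · have hmeas : ∀ n : ℕ, Measurable (fun ω => (Real.sqrt ((2 * (n : ℝ)) ^ d))⁻¹ *
      (gW d q (box (0 : Fin d → ℤ) n) (openCubes t ω) -
        ∫ ω', gW d q (box (0 : Fin d → ℤ) n) (openCubes t ω') ∂P)) := fun n =>
      ((dep_measurable (hGn n) t).sub_const _).const_mul _
    let μ : ℕ → ProbabilityMeasure ℝ := fun n =>
      ⟨P.map (fun ω => (Real.sqrt ((2 * (n : ℝ)) ^ d))⁻¹ *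
      (gW d q (box (0 : Fin d → ℤ) n) (openCubes t ω) -
        ∫ ω', gW d q (box (0 : Fin d → ℤ) n) (openCubes t ω') ∂P)),
        Measure.isProbabilityMeasure_map (hmeas n).aemeasurable⟩
    let μ₀ : ProbabilityMeasure ℝ := ⟨ProbabilityTheory.gaussianReal 0 σ2, inferInstance⟩
    have hlim : Tendsto μ atTop (𝓝 μ₀) := by
      refine ProbabilityMeasure.tendsto_of_tendsto_charFun fun θ => ?_
      have e0 : charFun (μ₀ : Measure ℝ) θ = Complex.exp ((-(σ2 : ℝ) * θ ^ 2 / 2 : ℝ) : ℂ) := by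
        change charFun (ProbabilityTheory.gaussianReal 0 σ2) θ = _
        rw [ProbabilityTheory.charFun_gaussianReal]
        congr 1
        push_cast
        ring
      rw [e0]
      refine (h2 θ).congr fun n => ?_
      change _ = charFun (P.map _) θ
      rw [charFun_apply_real, integral_map (hmeas n).aemeasurable (by fun_prop)]
      simp
    intro g
    have := (ProbabilityMeasure.tendsto_iff_forall_integral_tendsto.1 hlim) g
    refine this.congr fun n => ?_
    change ∫ x, g x ∂(P.map _) = _
    rw [integral_map (hmeas n).aemeasurable g.continuous.aestronglyMeasurable]

end
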